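/- There is a constant C = C(T), depending only on the data of T, such that for every S ∈ Γ* there is N with: for all n ≥ N, cap_p T ≤ C ∫_S M_{C/n}(ρ₀^{p−1}) dH, where M_r denotes the restricted Hardy–Littlewood maximal operator at scale r and ρ₀ is the minimizer of cap_p T in F. -/

import Mathlib

open MeasureTheory Metric Set Filter Topology
open scoped ENNReal NNReal unitInterval

noncomputable section

namespace Duality

/-! ### Rectifiable curves, line integrals and upper gradients

A rectifiable path is encoded by its arclength-type parametrization: a `1`-Lipschitz
map defined on a compact interval `[a, b]`.  The line integral `∫_γ ρ ds` of a
nonnegative Borel function is then the Lebesgue integral of `ρ ∘ γ` over `[a, b]`. -/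

structure UPath (X : Type*) [PseudoMetricSpace X] where
  a : ℝ
  b : ℝ
  hab : a ≤ b
  toFun : ℝ → X
  lip : LipschitzOnWith 1 toFun (Set.Icc a b)

namespace UPath

variable {X : Type*} [PseudoMetricSpace X]

/-- starting point of the path -/
def start (γ : UPath X) : X := γ.toFun γ.a

/-- end point of the path -/
def finish (γ : UPath X) : X := γ.toFun γ.b

/-- The line integral `∫_γ ρ ds`. -/
def integral (γ : UPath X) (ρ : X → ℝ≥0∞) : ℝ≥0∞ :=
  ∫⁻ t in Set.Icc γ.a γ.b, ρ (γ.toFun t)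

/-- The image (trace) `|γ|` of the path. -/
def trace (γ : UPath X) : Set X := γ.toFun '' Set.Icc γ.a γ.b

/-- The length of the path. -/
def length (γ : UPath X) : ℝ≥0∞ := eVariationOn γ.toFun (Set.Icc γ.a γ.b)

/-- The path stays inside the set `W`. -/
def InSet (γ : UPath X) (W : Set X) : Prop := ∀ t ∈ Set.Icc γ.a γ.b, γ.toFun t ∈ W

/-- The reparametrization of a rectifiable path as a `Path` (continuous map from `[0,1]`). -/
def toPath (γ : UPath X) : Path γ.start γ.finish where
  toFun := fun t => γ.toFun (γ.a + (t : ℝ) * (γ.b - γ.a))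
  continuous_toFun := by
    have hmem : ∀ t : unitInterval, γ.a + (t : ℝ) * (γ.b - γ.a) ∈ Set.Icc γ.a γ.b := by
      intro t
      obtain ⟨ht0, ht1⟩ := t.2
      constructor
      · nlinarith [γ.hab]
      · nlinarith [γ.hab]
    exact γ.lip.continuousOn.comp_continuous (by continuity) hmem
  source' := by simp [start]
  target' := by simp [finish]

end UPath

/-- `ρ` is an upper gradient of `u`. -/
def IsUpperGradient {X : Type*} [PseudoMetricSpace X] {Y : Type*} [PseudoEMetricSpace Y]
    (u : X → Y) (ρ : X → ℝ≥0∞) : Prop :=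
  ∀ γ : UPath X, edist (u γ.start) (u γ.finish) ≤ γ.integral ρ

/-- The `p`-modulus of a family of (rectifiable) paths. -/
def pathMod {X : Type*} [PseudoMetricSpace X] [MeasurableSpace X]
    (μ : Measure X) (p : ℝ) (Γ : Set (UPath X)) : ℝ≥0∞ :=
  ⨅ (ρ : X → ℝ≥0∞) (_ : Measurable ρ ∧ ∀ γ ∈ Γ, 1 ≤ γ.integral ρ),
    ∫⁻ x, ρ x ^ p ∂μ

/-- `ρ` is a `p`-weak upper gradient of `u`: the upper gradient inequality may fail
only on a path family of zero `p`-modulus. -/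
def IsWeakUpperGradient {X : Type*} [PseudoMetricSpace X] [MeasurableSpace X]
    {Y : Type*} [PseudoEMetricSpace Y] (μ : Measure X) (p : ℝ)
    (u : X → Y) (ρ : X → ℝ≥0∞) : Prop :=
  pathMod μ p {γ : UPath X | ¬ edist (u γ.start) (u γ.finish) ≤ γ.integral ρ} = 0

/-- `ρ` is a `p`-weak upper gradient of `u` in the subset `U`. -/
def IsWeakUpperGradientOn {X : Type*} [PseudoMetricSpace X] [MeasurableSpace X]
    {Y : Type*} [PseudoEMetricSpace Y] (μ : Measure X) (p : ℝ) (U : Set X)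
    (u : X → Y) (ρ : X → ℝ≥0∞) : Prop :=
  pathMod (μ.restrict U) p
    {γ : UPath X | γ.InSet U ∧ ¬ edist (u γ.start) (u γ.finish) ≤ γ.integral ρ} = 0

/-- `ρ` is the minimal `p`-weak upper gradient of `u`: it is a `p`-integrable `p`-weak
upper gradient which is `μ`-a.e. dominated by every other one. -/
def IsMinimalWeakUpperGradient {X : Type*} [PseudoMetricSpace X] [MeasurableSpace X]
    {Y : Type*} [PseudoEMetricSpace Y] (μ : Measure X) (p : ℝ)
    (u : X → Y) (ρ : X → ℝ≥0∞) : Prop :=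
  Measurable ρ ∧ IsWeakUpperGradient μ p u ρ ∧ (∫⁻ x, ρ x ^ p ∂μ) < ⊤ ∧
    ∀ ρ' : X → ℝ≥0∞, Measurable ρ' → IsWeakUpperGradient μ p u ρ' →
      (∫⁻ x, ρ' x ^ p ∂μ) < ⊤ → ∀ᵐ x ∂μ, ρ x ≤ ρ' x

/-! ### Doubling measures, Poincaré inequalities, Ahlfors regularity -/

/-- `μ` is a doubling (Borel) measure with doubling constant `Cμ`:
`0 < μ(2B) ≤ Cμ · μ(B) < ∞` for every ball `B` of radius `r < diam T`. -/
def IsDoubling {X : Type*} [MetricSpace X] [MeasurableSpace X]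
    (μ : Measure X) (Cμ : ℝ≥0∞) : Prop :=
  ∀ (x : X) (r : ℝ), 0 < r → r < Metric.diam (Set.univ : Set X) →
    0 < μ (ball x (2 * r)) ∧ μ (ball x (2 * r)) ≤ Cμ * μ (ball x r) ∧
      Cμ * μ (ball x r) < ⊤

/-- `(X, d, μ)` supports a weak `1`-Poincaré inequality with constants `CP`, `lP`:
`⨍_B |u - u_B| dμ ≤ CP · diam B · ⨍_{lP·B} ρ dμ` for every locally integrable `u`
and every upper gradient `ρ` of `u`, and balls have positive finite measure. -/
def SupportsPoincare {X : Type*} [MetricSpace X] [MeasurableSpace X]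
    (μ : Measure X) (CP lP : ℝ) : Prop :=
  (∀ (x : X) (r : ℝ), 0 < r → 0 < μ (ball x r) ∧ μ (ball x r) < ⊤) ∧
  ∀ (u : X → ℝ) (ρ : X → ℝ≥0∞), LocallyIntegrable u μ → Measurable ρ →
    IsUpperGradient u ρ → ∀ (x : X) (r : ℝ), 0 < r →
      (∫⁻ y in ball x r, ENNReal.ofReal |u y - ⨍ z in ball x r, u z ∂μ| ∂μ) /
          μ (ball x r) ≤
        ENNReal.ofReal (CP * Metric.diam (ball x r)) *
          ((∫⁻ y in ball x (lP * r), ρ y ∂μ) / μ (ball x (lP * r)))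

/-- `μ` is Ahlfors `q`-regular with constants `0 < aA ≤ AA`. -/
def IsAhlforsRegular {X : Type*} [MetricSpace X] [MeasurableSpace X]
    (μ : Measure X) (q aA AA : ℝ) : Prop :=
  0 < aA ∧ aA ≤ AA ∧
    ∀ (x : X) (r : ℝ), 0 < r → r < Metric.diam (Set.univ : Set X) →
      ENNReal.ofReal (aA * r ^ q) ≤ μ (ball x r) ∧
        μ (ball x r) ≤ ENNReal.ofReal (AA * r ^ q)

/-! ### The circle `ℝ/ℤ`, loops and degree -/

lemma intCast_coe_eq_zero (k : ℤ) : ((k : ℝ) : UnitAddCircle) = 0 :=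
  (AddCircle.coe_eq_zero_iff _).mpr ⟨k, by simp⟩

/-- The standard loop of degree `k` in `ℝ/ℤ` based at `y`: `t ↦ y + [k t]`. -/
def stdLoop (k : ℤ) (y : UnitAddCircle) : Path y y where
  toFun := fun t => y + (((k : ℝ) * (t : ℝ) : ℝ) : UnitAddCircle)
  continuous_toFun := by
    refine continuous_const.add ?_
    exact (AddCircle.continuous_mk' 1).comp (by continuity)
  source' := by simp
  target' := by
    have h1 : ((1 : unitInterval) : ℝ) = 1 := rfl
    have h : (((k : ℝ) * ((1 : unitInterval) : ℝ) : ℝ) : UnitAddCircle) = 0 := by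
      rw [h1, mul_one]; exact intCast_coe_eq_zero k
    simp [h]

/-- Concatenation of `n` copies of a loop. -/
def loopPow {X : Type*} [TopologicalSpace X] {x : X} (γ : Path x x) : ℕ → Path x x
  | 0 => Path.refl x
  | n + 1 => (loopPow γ n).trans γ

/-- A loop `γ` based at `x` has degree 1 (relative to the chosen generator `α₀` based
at `x₀`) if it is loop-homotopic to a conjugate `η * α₀ * η⁻¹` of `α₀`. -/
def IsDegreeOneLoop {T : Type*} [TopologicalSpace T] (x₀ : T) (α₀ : Path x₀ x₀)
    {x : T} (γ : Path x x) : Prop :=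
  ∃ η : Path x x₀, Path.Homotopic γ (η.trans (α₀.trans η.symm))

/-- A map `f : T → ℝ/ℤ` has degree `k`: it pushes every degree-1 loop based at `x`
to a loop which is loop-homotopic to `[f x] + k·β`, `β (t) = [t]`. -/
def HasDegree {T : Type*} [TopologicalSpace T] (x₀ : T) (α₀ : Path x₀ x₀)
    (f : T → UnitAddCircle) (k : ℤ) : Prop :=
  ∃ hf : Continuous f, ∀ (x : T) (γ : Path x x), IsDegreeOneLoop x₀ α₀ γ →
    Path.Homotopic (γ.map hf) (stdLoop k (f x))

/-- The class of `α₀` generates `π₁(T, x₀) ≅ ℤ`. -/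
def IsGenerator {T : Type*} [TopologicalSpace T] (x₀ : T) (α₀ : Path x₀ x₀) : Prop :=
  Function.Bijective fun k : ℤ =>
    (FundamentalGroup.fromPath (X := TopCat.of T) ⟦α₀⟧ : FundamentalGroup (TopCat.of T) x₀) ^ k

/-- `T` is semilocally simply connected. -/
def SemilocallySimplyConnected (T : Type*) [TopologicalSpace T] : Prop :=
  ∀ x : T, ∃ U ∈ 𝓝 x, ∀ γ : Path x x, (∀ t, γ t ∈ U) → Path.Homotopic γ (Path.refl x)

/-- `f` is a Lipschitz map of degree 1. -/
def DegOneLip {T : Type*} [MetricSpace T] (x₀ : T) (α₀ : Path x₀ x₀)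
    (f : T → UnitAddCircle) : Prop :=
  (∃ L : ℝ≥0, LipschitzWith L f) ∧ HasDegree x₀ α₀ f 1

/-! ### Capacity and surface modulus -/

/-- The degree 1 `p`-capacity of `T`, defined through minimal `p`-weak upper gradients:
the infimum of `∫ ρ^p dμ` over `p`-weak upper gradients `ρ` of Lipschitz degree-1 maps. -/
def cap {T : Type*} [MetricSpace T] [MeasurableSpace T] (μ : Measure T) (p : ℝ)
    (x₀ : T) (α₀ : Path x₀ x₀) : ℝ≥0∞ :=
  ⨅ (f : T → UnitAddCircle) (_ : DegOneLip x₀ α₀ f) (ρ : T → ℝ≥0∞)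
    (_ : Measurable ρ ∧ IsWeakUpperGradient μ p f ρ),
      ∫⁻ x, ρ x ^ p ∂μ

/-- The pointwise Lipschitz constant `Lip f (x)`. -/
def pLip {T : Type*} [MetricSpace T] (f : T → UnitAddCircle) (x : T) : ℝ≥0∞ :=
  Filter.limsup
    (fun r : ℝ => ⨆ y ∈ ball x r, edist (f x) (f y) / ENNReal.ofReal r) (𝓝[>] (0 : ℝ))

/-- The degree 1 `p`-capacity of `T`, defined through pointwise Lipschitz constants. -/
def capLip {T : Type*} [MetricSpace T] [MeasurableSpace T] (μ : Measure T) (p : ℝ)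
    (x₀ : T) (α₀ : Path x₀ x₀) : ℝ≥0∞ :=
  ⨅ (f : T → UnitAddCircle) (_ : DegOneLip x₀ α₀ f), ∫⁻ x, pLip f x ^ p ∂μ

/-- The codimension 1 spherical Hausdorff measure, as a set function:
`H(A) = sup_{δ>0} inf { ∑ μ(B_i)/r_i }`, the infimum being over countable covers of `A`
by balls `B_i` of radii `r_i ≤ δ`. -/
def codimH {T : Type*} [MetricSpace T] [MeasurableSpace T] (μ : Measure T)
    (A : Set T) : ℝ≥0∞ :=
  ⨆ (δ : ℝ) (_ : 0 < δ),
    ⨅ (c : ℕ → T) (r : ℕ → ℝ) (_ : ∀ i, r i ≤ δ)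
      (_ : A ⊆ ⋃ i, ball (c i) (r i)),
        ∑' i, μ (ball (c i) (r i)) / ENNReal.ofReal (r i)

/-- The integral `∫_S g dH` of `g ≥ 0` over `S` against the codimension 1 Hausdorff
measure, via the layer-cake (Choquet) formula. -/
def choquetIntegral {T : Type*} [MetricSpace T] [MeasurableSpace T] (μ : Measure T)
    (S : Set T) (g : T → ℝ≥0∞) : ℝ≥0∞ :=
  ∫⁻ t in Set.Ioi (0 : ℝ), codimH μ {x | x ∈ S ∧ ENNReal.ofReal t < g x}

/-- The family `Γ*` of all level sets `φ⁻¹[0]` of finite codimension 1 Hausdorff measure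
of continuous degree-1 maps `φ : T → ℝ/ℤ`. -/
def Surfaces {T : Type*} [MetricSpace T] [MeasurableSpace T] (μ : Measure T)
    (x₀ : T) (α₀ : Path x₀ x₀) : Set (Set T) :=
  {S | ∃ φ : T → UnitAddCircle, HasDegree x₀ α₀ φ 1 ∧ S = φ ⁻¹' {0} ∧ codimH μ S < ⊤}

/-- The surface `q`-modulus of a family of surfaces, the surfaces being equipped with the
codimension 1 Hausdorff measure. -/
def surfModOf {T : Type*} [MetricSpace T] [MeasurableSpace T] (μ : Measure T) (q : ℝ)
    (𝒮 : Set (Set T)) : ℝ≥0∞ :=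
  ⨅ (ρ : T → ℝ≥0∞) (_ : Measurable ρ ∧ ∀ S ∈ 𝒮, 1 ≤ choquetIntegral μ S ρ),
    ∫⁻ x, ρ x ^ q ∂μ

/-- The surface modulus `mod_q T`. -/
def surfMod {T : Type*} [MetricSpace T] [MeasurableSpace T] (μ : Measure T) (q : ℝ)
    (x₀ : T) (α₀ : Path x₀ x₀) : ℝ≥0∞ :=
  surfModOf μ q (Surfaces μ x₀ α₀)

/-- The family `Γ*` with the `(q-1)`-dimensional Hausdorff measure instead. -/
def SurfacesH {T : Type*} [MetricSpace T] [MeasurableSpace T] [BorelSpace T] (q : ℝ)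
    (x₀ : T) (α₀ : Path x₀ x₀) : Set (Set T) :=
  {S | ∃ φ : T → UnitAddCircle, HasDegree x₀ α₀ φ 1 ∧ S = φ ⁻¹' {0} ∧ μH[q - 1] S < ⊤}

/-- The surface modulus `mod_q T` defined through the `(q-1)`-dimensional Hausdorff
measures `H^{q-1} ⌞ S`, `S ∈ Γ*`. -/
def surfModH {T : Type*} [MetricSpace T] [MeasurableSpace T] [BorelSpace T]
    (μ : Measure T) (q pstar : ℝ) (x₀ : T) (α₀ : Path x₀ x₀) : ℝ≥0∞ :=
  ⨅ (ρ : T → ℝ≥0∞)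
    (_ : Measurable ρ ∧ ∀ S ∈ SurfacesH (T := T) q x₀ α₀, 1 ≤ ∫⁻ x in S, ρ x ∂μH[q - 1]),
      ∫⁻ x, ρ x ^ pstar ∂μ

/-- The standing assumptions 2.1. -/
def Standing {T : Type*} [MetricSpace T] [MeasurableSpace T] (μ : Measure T)
    (Cμ : ℝ≥0∞) (CP lP : ℝ) (x₀ : T) (α₀ : Path x₀ x₀) : Prop :=
  IsDoubling μ Cμ ∧ SupportsPoincare μ CP lP ∧ SemilocallySimplyConnected T ∧
    IsGenerator x₀ α₀ ∧ ∃ f : T → UnitAddCircle, DegOneLip x₀ α₀ f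

/-! ### The universal cover -/

/-- `π` is a local isometry. -/
def IsLocalIsometry {X Y : Type*} [MetricSpace X] [MetricSpace Y] (π : X → Y) : Prop :=
  ∀ x : X, ∃ ε : ℝ, 0 < ε ∧
    ∀ y ∈ ball x ε, ∀ z ∈ ball x ε, dist (π y) (π z) = dist y z

/-- `(T̃, π)` is the universal cover of `T`, with `T̃` carrying the length metric pulled
back by `π` (so that `π` is a local isometry). -/
def CoverSetup {T Tt : Type*} [MetricSpace T] [MetricSpace Tt] (π : Tt → T) : Prop :=
  IsCoveringMap π ∧ Function.Surjective π ∧ IsLocalIsometry π ∧ SimplyConnectedSpace Tt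

/-- `τ` is the deck transformation of the cover `π` determined by
`τ (γ̃ 0) = γ̃ 1` for every lift `γ̃` of every degree-1 loop `γ`. -/
def IsDeck {T Tt : Type*} [MetricSpace T] [MetricSpace Tt] (π : Tt → T)
    (x₀ : T) (α₀ : Path x₀ x₀) (τ : Tt → Tt) : Prop :=
  Continuous τ ∧ (∀ x, π (τ x) = π x) ∧
    ∀ (x : T) (γ : Path x x), IsDegreeOneLoop x₀ α₀ γ →
      ∀ γt : C(unitInterval, Tt), (∀ t, π (γt t) = γ t) → τ (γt 0) = γt 1

/-- `μ̃` is the natural lift of `μ` to the cover: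
`μ̃ (A) = ∫ #(π⁻¹(x) ∩ A) dμ (x)`. -/
def IsLiftedMeasure {T Tt : Type*} [MetricSpace T] [MeasurableSpace T]
    [MetricSpace Tt] [MeasurableSpace Tt] (π : Tt → T) (μ : Measure T)
    (μt : Measure Tt) : Prop :=
  ∀ A : Set Tt, MeasurableSet A → μt A = ∫⁻ x, ((π ⁻¹' {x} ∩ A).encard : ℝ≥0∞) ∂μ

/-! ### Newtonian spaces -/

/-- The seminorm of `N^{1,p}(U)`. -/
def NSeminorm {X : Type*} [PseudoMetricSpace X] [MeasurableSpace X] (μ : Measure X)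
    (p : ℝ) (U : Set X) (f : X → ℝ) : ℝ≥0∞ :=
  (∫⁻ x in U, ENNReal.ofReal |f x| ^ p ∂μ) ^ (1 / p) +
    ⨅ (ρ : X → ℝ≥0∞) (_ : Measurable ρ ∧ IsWeakUpperGradientOn μ p U f ρ),
      (∫⁻ x in U, ρ x ^ p ∂μ) ^ (1 / p)

/-- `f ∈ N^{1,p}_loc`. -/
def MemNloc {X : Type*} [PseudoMetricSpace X] [MeasurableSpace X] (μ : Measure X)
    (p : ℝ) (f : X → ℝ) : Prop :=
  ∀ U : Set X, IsOpen U → IsCompact (closure U) →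
    (∫⁻ x in U, ENNReal.ofReal |f x| ^ p ∂μ) < ⊤ ∧
      ∃ ρ : X → ℝ≥0∞, Measurable ρ ∧ IsWeakUpperGradientOn μ p U f ρ ∧
        (∫⁻ x in U, ρ x ^ p ∂μ) < ⊤

/-- The collection `F`: nonnegative Borel functions `ρ` on `T` such that `ρ ∘ π` is a
`p`-weak upper gradient of some `f ∈ N^{1,p}_loc (T̃)` with `f ∘ τ - f = 1` a.e. -/
def MemF {T Tt : Type*} [MetricSpace T] [MeasurableSpace T] [MetricSpace Tt]
    [MeasurableSpace Tt] (π : Tt → T) (τ : Tt → Tt) (μt : Measure Tt) (p : ℝ)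
    (ρ : T → ℝ≥0∞) : Prop :=
  Measurable ρ ∧ ∃ f : Tt → ℝ, MemNloc μt p f ∧ (∀ᵐ x ∂μt, f (τ x) - f x = 1) ∧
    IsWeakUpperGradient μt p f (ρ ∘ π)

/-- The capacity `cap_p^F T`. -/
def capF {T Tt : Type*} [MetricSpace T] [MeasurableSpace T] [MetricSpace Tt]
    [MeasurableSpace Tt] (μ : Measure T) (π : Tt → T) (τ : Tt → Tt) (μt : Measure Tt)
    (p : ℝ) : ℝ≥0∞ :=
  ⨅ (ρ : T → ℝ≥0∞) (_ : MemF π τ μt p ρ), ∫⁻ x, ρ x ^ p ∂μ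

/-! ### Miscellaneous operators -/

/-- The restricted Hardy–Littlewood maximal operator `M_R`. -/
def restrMax {T : Type*} [MetricSpace T] [MeasurableSpace T] (μ : Measure T)
    (R : ℝ≥0∞) (g : T → ℝ≥0∞) (x : T) : ℝ≥0∞ :=
  ⨆ (s : ℝ) (_ : 0 < s ∧ ENNReal.ofReal s ≤ R),
    (∫⁻ y in ball x s, g y ∂μ) / μ (ball x s)

/-- The upper Lebesgue integral. -/
def upperLintegral {Y : Type*} [MeasurableSpace Y] (ν : Measure Y)
    (F : Y → ℝ≥0∞) : ℝ≥0∞ :=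
  ⨅ (G : Y → ℝ≥0∞) (_ : Measurable G ∧ ∀ y, F y ≤ G y), ∫⁻ y, G y ∂ν

/-! ### The sets `Ω` and the functions `ψ̃`, `ζ`, `ψ` of Section 4.3 -/

/-- The set of points reachable from `A` by a rectifiable path inside `W`. -/
def reach {T : Type*} [MetricSpace T] (A W : Set T) : Set T :=
  {x | ∃ γ : UPath T, γ.start ∈ A ∧ γ.finish = x ∧ γ.InSet W}

/-- `inf_γ ∫_γ ρ ds` over rectifiable paths connecting `A` to `x` inside `W`. -/
def pathDist {T : Type*} [MetricSpace T] (ρ : T → ℝ≥0∞) (A W : Set T) (x : T) : ℝ≥0∞ :=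
  ⨅ (γ : UPath T) (_ : γ.start ∈ A ∧ γ.finish = x ∧ γ.InSet W), γ.integral ρ

open scoped Classical in
/-- The function `ψ̃`. -/
def psiTilde {T : Type*} [MetricSpace T] (ρ : T → ℝ≥0∞) (A W : Set T) (x : T) : ℝ :=
  if x ∈ reach A W then (pathDist ρ A W x).toReal else 0

/-- The function `min {1, ψ̃}`. -/
def zeta {T : Type*} [MetricSpace T] (ρ : T → ℝ≥0∞) (A W : Set T) (x : T) : ℝ :=
  min 1 (psiTilde ρ A W x)

/-- The competing admissible map `ψ = [min {1, ψ̃}] : T → ℝ/ℤ`. -/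
def psiMap {T : Type*} [MetricSpace T] (ρ : T → ℝ≥0∞) (A W : Set T) (x : T) :
    UnitAddCircle :=
  ((zeta ρ A W x : ℝ) : UnitAddCircle)

end Duality

namespace Duality

/-- A doubling finite measure supporting a `1`-Poincaré inequality, with normalized constants
valid at all scales. -/
structure IsPIMeasure {T : Type*} [MetricSpace T] [MeasurableSpace T]
    (μ : Measure T) (D K : ℝ≥0) (Λ : ℝ) : Prop where
  one_le_D : 1 ≤ D
  one_le_Λ : 1 ≤ Λ
  measure_univ_lt_top : μ univ < ⊤
  ball_pos : ∀ (x : T) (r : ℝ), 0 < r → 0 < μ (ball x r)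
  doubling : ∀ (x : T) (r : ℝ), 0 < r → μ (ball x (2 * r)) ≤ D * μ (ball x r)
  poincare : ∀ (u : T → ℝ) (ρ : T → ℝ≥0∞), LocallyIntegrable u μ → Measurable ρ →
    IsUpperGradient u ρ → ∀ (x : T) (r : ℝ), 0 < r →
      (∫⁻ y in ball x r, ENNReal.ofReal |u y - ⨍ z in ball x r, u z ∂μ| ∂μ) ≤
        K * ENNReal.ofReal r * ∫⁻ y in ball x (Λ * r), ρ y ∂μ

section Doubling

variable {T : Type*} [MetricSpace T] [MeasurableSpace T] {μ : Measure T} {D : ℝ≥0}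

lemma measure_ball_two_pow_le
    (hD : ∀ (x : T) (r : ℝ), 0 < r → μ (ball x (2 * r)) ≤ D * μ (ball x r))
    (k : ℕ) (x : T) {r : ℝ} (hr : 0 < r) :
    μ (ball x (2 ^ k * r)) ≤ D ^ k * μ (ball x r) := by
  induction k with
  | zero => simp
  | succ k ih =>
    calc μ (ball x (2 ^ (k + 1) * r)) = μ (ball x (2 * (2 ^ k * r))) := by ring_nf
      _ ≤ D * μ (ball x (2 ^ k * r)) := hD x _ (by positivity)
      _ ≤ D * (D ^ k * μ (ball x r)) := by gcongr
      _ = D ^ (k + 1) * μ (ball x r) := by ring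

lemma measure_ball_le_pow_mul
    (hD : ∀ (x : T) (r : ℝ), 0 < r → μ (ball x (2 * r)) ≤ D * μ (ball x r))
    (k : ℕ) {x y : T} {r R : ℝ} (hr : 0 < r) (h : R + dist x y ≤ 2 ^ k * r) :
    μ (ball x R) ≤ D ^ k * μ (ball y r) :=
  (measure_mono (ball_subset_ball' h)).trans (measure_ball_two_pow_le hD k y hr)

lemma IsDoubling.measure_ball_two_mul_le [CompactSpace T] [Nontrivial T] {Cμ : ℝ≥0∞}
    (h : IsDoubling μ Cμ) (x : T) {r : ℝ} (hr : 0 < r) :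
    μ (ball x (2 * r)) ≤ Cμ * μ (ball x r) := by
  have hd : 0 < Metric.diam (univ : Set T) :=
    Metric.diam_pos nontrivial_univ isCompact_univ.isBounded
  rcases lt_or_ge r (Metric.diam (univ : Set T)) with hlt | hge
  · exact (h x r hr hlt).2.1
  · set d := Metric.diam (univ : Set T)
    have huniv : ball x (2 * (3 / 4 * d)) = univ := by
      refine eq_univ_of_forall fun y => ?_
      have := Metric.dist_le_diam_of_mem (isCompact_univ (X := T)).isBounded
        (mem_univ y) (mem_univ x)
      rw [mem_ball]
      change _ ≤ d at this
      linarith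
    calc μ (ball x (2 * r)) ≤ μ (ball x (2 * (3 / 4 * d))) := by
          rw [huniv]; exact measure_mono (subset_univ _)
      _ ≤ Cμ * μ (ball x (3 / 4 * d)) := (h x _ (by linarith) (by linarith)).2.1
      _ ≤ Cμ * μ (ball x r) := by gcongr; linarith

lemma IsDoubling.ne_top [CompactSpace T] [Nontrivial T] {Cμ : ℝ≥0∞} {CP lP : ℝ}
    (h : IsDoubling μ Cμ) (hP : SupportsPoincare μ CP lP) : Cμ ≠ ⊤ := by
  rintro rfl
  obtain ⟨x⟩ := (inferInstance : Nonempty T)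
  have hd : 0 < Metric.diam (univ : Set T) :=
    Metric.diam_pos nontrivial_univ isCompact_univ.isBounded
  have h1 := (h x (Metric.diam (univ : Set T) / 2) (by linarith) (by linarith)).2.2
  rw [ENNReal.top_mul (hP.1 x _ (by linarith)).1.ne'] at h1
  exact lt_irrefl _ h1

end Doubling

lemma measure_univ_lt_top_of_ball {T : Type*} [MetricSpace T] [MeasurableSpace T]
    [CompactSpace T] [Nonempty T] {μ : Measure T}
    (h : ∀ (x : T) (r : ℝ), 0 < r → μ (ball x r) < ⊤) : μ univ < ⊤ := by
  obtain ⟨x⟩ := (inferInstance : Nonempty T)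
  obtain ⟨R, hR0, hR⟩ := (isCompact_univ (X := T)).isBounded.subset_ball_lt 0 x
  exact (measure_mono hR).trans_lt (h x R hR0)

/-- The normalized constants can be chosen depending only on the original ones. -/
lemma exists_isPIMeasure_constants (Cμ : ℝ≥0∞) (CP lP : ℝ) :
    ∃ (D K : ℝ≥0) (Λ : ℝ), ∀ (T : Type) [MetricSpace T] [MeasurableSpace T] [CompactSpace T]
      [Nontrivial T] (μ : Measure T), IsDoubling μ Cμ → SupportsPoincare μ CP lP →
        IsPIMeasure μ D K Λ := by
  obtain ⟨k, hk⟩ : ∃ k : ℕ, 0 < lP → 1 ≤ 2 ^ k * lP := by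
    obtain ⟨k, hk⟩ := pow_unbounded_of_one_lt (1 / lP) (one_lt_two)
    refine ⟨k, fun h => ?_⟩
    rw [div_lt_iff₀ h] at hk
    exact hk.le
  set D : ℝ≥0 := max 1 Cμ.toNNReal with hDdef
  refine ⟨D, D ^ k * (2 * CP).toNNReal, max 1 lP, ?_⟩
  intro T _ _ _ _ μ hdoub hP
  have hCle : Cμ ≤ D := by
    rw [← ENNReal.coe_toNNReal (hdoub.ne_top hP)]
    exact_mod_cast le_max_right _ _
  have hD : ∀ (x : T) (r : ℝ), 0 < r → μ (ball x (2 * r)) ≤ D * μ (ball x r) := fun x r hr =>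
    (hdoub.measure_ball_two_mul_le x hr).trans (by gcongr)
  refine ⟨le_max_left _ _, le_max_left _ _,
    measure_univ_lt_top_of_ball fun x r hr => (hP.1 x r hr).2, fun x r hr => (hP.1 x r hr).1,
    hD, ?_⟩
  intro u ρ hu hρ hug x r hr
  have h0 := (hP.1 x r hr).1.ne'
  have htop := (hP.1 x r hr).2.ne
  have hmain := hP.2 u ρ hu hρ hug x r hr
  rw [ENNReal.div_le_iff h0 htop] at hmain
  refine hmain.trans ?_
  rcases le_or_gt lP 0 with hl | hl
  · have : ball x (lP * r) = ∅ := ball_eq_empty.2 (by nlinarith)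
    simp [this]
  · have hlr : 0 < lP * r := by positivity
    have hb : μ (ball x r) ≤ D ^ k * μ (ball x (lP * r)) := by
      refine measure_ball_le_pow_mul hD k hlr ?_
      rw [dist_self]
      nlinarith [hk hl]
    have hc0 := (hP.1 x _ hlr).1.ne'
    have hct := (hP.1 x _ hlr).2.ne
    have hdiam : ENNReal.ofReal (CP * Metric.diam (ball x r)) ≤
        (2 * CP).toNNReal * ENNReal.ofReal r := by
      have : ((2 * CP).toNNReal : ℝ≥0∞) = ENNReal.ofReal (2 * CP) := rfl
      rw [this]
      rcases le_or_gt CP 0 with h | h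
      · rw [ENNReal.ofReal_of_nonpos]
        · exact zero_le
        · exact mul_nonpos_of_nonpos_of_nonneg h Metric.diam_nonneg
      · rw [← ENNReal.ofReal_mul (by positivity)]
        refine ENNReal.ofReal_le_ofReal ?_
        nlinarith [Metric.diam_ball (x := x) hr.le]
    have hsub : ball x (lP * r) ⊆ ball x (max 1 lP * r) :=
      ball_subset_ball (by gcongr; exact le_max_right _ _)
    calc ENNReal.ofReal (CP * Metric.diam (ball x r)) *
          ((∫⁻ y in ball x (lP * r), ρ y ∂μ) / μ (ball x (lP * r))) * μ (ball x r)
        ≤ ((2 * CP).toNNReal * ENNReal.ofReal r) *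
          ((∫⁻ y in ball x (max 1 lP * r), ρ y ∂μ) / μ (ball x (lP * r))) *
          (D ^ k * μ (ball x (lP * r))) := by
          gcongr
      _ = ((D ^ k * (2 * CP).toNNReal : ℝ≥0) : ℝ≥0∞) * ENNReal.ofReal r *
          (((∫⁻ y in ball x (max 1 lP * r), ρ y ∂μ) / μ (ball x (lP * r))) *
            μ (ball x (lP * r))) := by push_cast; ring
      _ = _ := by rw [ENNReal.div_mul_cancel hc0 hct]

end Duality

namespace Duality

/-- A local upper gradient inequality on an interval implies the global one. -/
lemma edist_le_lintegral_of_local {Y : Type*} [PseudoEMetricSpace Y] {F : ℝ → Y}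
    {q : ℝ → ℝ≥0∞} {a b : ℝ} (hab : a ≤ b)
    (h : ∀ t₀ ∈ Icc a b, ∃ ε > 0, ∀ t ∈ Icc a b, ∀ t' ∈ Icc a b, t ∈ ball t₀ ε →
      t' ∈ ball t₀ ε → t ≤ t' → edist (F t) (F t') ≤ ∫⁻ s in Icc t t', q s) :
    edist (F a) (F b) ≤ ∫⁻ s in Icc a b, q s := by
  choose! ε hε0 hε using h
  obtain ⟨δ, hδ0, hδ⟩ := lebesgue_number_lemma_of_metric (s := Icc a b)
    (c := fun t₀ : Icc a b => ball (t₀ : ℝ) (ε t₀)) isCompact_Icc (fun _ => isOpen_ball)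
    (fun t ht => mem_iUnion.2 ⟨⟨t, ht⟩, mem_ball_self (hε0 t ht)⟩)
  have hstep : ∀ t ∈ Icc a b, ∀ t' ∈ Icc a b, t ≤ t' → t' < t + δ →
      edist (F t) (F t') ≤ ∫⁻ s in Icc t t', q s := by
    intro t ht t' ht' htt' hlt
    obtain ⟨⟨t₀, ht₀⟩, hsub⟩ := hδ t ht
    refine hε t₀ ht₀ t ht t' ht' (hsub (mem_ball_self hδ0)) (hsub ?_) htt'
    rw [mem_ball, Real.dist_eq, abs_lt]
    constructor <;> linarith
  have hind : ∀ n : ℕ, ∀ t ∈ Icc a b, t ≤ a + n * (δ / 2) →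
      edist (F a) (F t) ≤ ∫⁻ s in Icc a t, q s := by
    intro n
    induction n with
    | zero =>
      intro t ht hta
      have : t = a := le_antisymm (by simpa using hta) ht.1
      simp [this]
    | succ n ih =>
      intro t ht hta
      push_cast at hta
      rcases le_total t (a + n * (δ / 2)) with hle | hge
      · exact ih t ht hle
      · set t₁ := a + n * (δ / 2)
        have ht₁ : t₁ ∈ Icc a b := ⟨le_add_of_nonneg_right (by positivity), hge.trans ht.2⟩
        calc edist (F a) (F t) ≤ edist (F a) (F t₁) + edist (F t₁) (F t) :=
              edist_triangle _ _ _
          _ ≤ (∫⁻ s in Icc a t₁, q s) + ∫⁻ s in Icc t₁ t, q s :=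
              add_le_add (ih t₁ ht₁ le_rfl) (hstep t₁ ht₁ t ht hge (by simp only [t₁]; linarith))
          _ = (∫⁻ s in Icc a t₁, q s) + ∫⁻ s in Ioc t₁ t, q s := by
              rw [Measure.restrict_congr_set (Ioc_ae_eq_Icc (a := t₁) (b := t))]
          _ = ∫⁻ s in Icc a t, q s := by
              rw [← lintegral_union measurableSet_Ioc, Icc_union_Ioc_eq_Icc ht₁.1 hge]
              exact Set.disjoint_left.2 fun x hx hx' => not_lt.2 hx.2 hx'.1
  obtain ⟨n, hn⟩ := exists_nat_ge ((b - a) / (δ / 2))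
  refine hind n b ⟨hab, le_rfl⟩ ?_
  rw [div_le_iff₀ (by positivity)] at hn
  linarith

section CoarsePath

variable {T : Type*} [MetricSpace T]

/-- `x` and `y` are joined by a map which is `1`-Lipschitz up to an additive error `ε`,
parametrized by `[0, ℓ]`. -/
def CoarsePath (ε : ℝ) (x y : T) (ℓ : ℝ) : Prop :=
  ∃ f : ℝ → T, (∀ t ≤ 0, f t = x) ∧ (∀ t ≥ ℓ, f t = y) ∧ ∀ s t, dist (f s) (f t) ≤ |s - t| + ε

lemma CoarsePath.refl {ε : ℝ} (hε : 0 ≤ ε) (x : T) : CoarsePath ε x x 0 :=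
  ⟨fun _ => x, fun _ _ => rfl, fun _ _ => rfl, fun s t => by rw [dist_self]; positivity⟩

lemma CoarsePath.mono {ε : ℝ} {x y : T} {ℓ ℓ' : ℝ} (h : CoarsePath ε x y ℓ) (hl : ℓ ≤ ℓ') :
    CoarsePath ε x y ℓ' := by
  obtain ⟨f, h1, h2, h3⟩ := h
  exact ⟨f, h1, fun t ht => h2 t (hl.trans ht), h3⟩

lemma CoarsePath.extend {ε : ℝ} {x y z : T} {ℓ : ℝ} (hℓ : 0 ≤ ℓ) (h : CoarsePath ε x y ℓ)
    (hyz : dist y z ≤ ε) : CoarsePath ε x z (ℓ + dist y z) := by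
  obtain ⟨f, h1, h2, h3⟩ := h
  have hd : 0 ≤ dist y z := dist_nonneg
  have key : ∀ s t, s < ℓ + dist y z → ℓ + dist y z ≤ t → dist (f s) z ≤ |s - t| + ε := by
    intro s t hs ht
    rw [abs_sub_comm, abs_of_nonneg (by linarith)]
    rcases le_total ℓ s with hls | hls
    · rw [h2 s hls]; linarith
    · have := h3 s ℓ
      rw [h2 ℓ le_rfl, abs_sub_comm, abs_of_nonneg (by linarith)] at this
      linarith [dist_triangle (f s) y z]
  refine ⟨fun t => if t < ℓ + dist y z then f t else z, fun t ht => ?_, fun t ht => ?_,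
    fun s t => ?_⟩
  · dsimp only
    split_ifs with h
    · exact h1 t ht
    · have hyz0 : dist y z = 0 := by linarith
      rw [← dist_eq_zero.1 hyz0, ← h2 t (by linarith), h1 t ht]
  · exact if_neg (not_lt.2 ht)
  · dsimp only
    split_ifs with hs ht ht
    · exact h3 s t
    · exact key s t hs (not_lt.1 ht)
    · rw [dist_comm, abs_sub_comm]; exact key t s ht (not_lt.1 hs)
    · rw [dist_self]
      exact add_nonneg (abs_nonneg _) (hd.trans hyz)

/-- The length of the shortest coarse path. -/
def coarseDist (ε : ℝ) (x y : T) : ℝ := sInf {ℓ | 0 ≤ ℓ ∧ CoarsePath ε x y ℓ}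

lemma coarsePath_of_coarseDist_lt {ε : ℝ} {x y : T} {L : ℝ}
    (hne : ∃ ℓ, 0 ≤ ℓ ∧ CoarsePath ε x y ℓ) (h : coarseDist ε x y < L) : CoarsePath ε x y L := by
  obtain ⟨ℓ, hℓ, hlt⟩ := exists_lt_of_csInf_lt hne h
  exact hℓ.2.mono hlt.le

lemma coarseDist_self {ε : ℝ} (hε : 0 ≤ ε) (x : T) : coarseDist ε x x = 0 :=
  le_antisymm (csInf_le ⟨0, fun _ h => h.1⟩ ⟨le_rfl, .refl hε x⟩)
    (Real.sInf_nonneg fun _ h => h.1)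

lemma coarseDist_le_add {ε : ℝ} {x y z : T} (hne : ∃ ℓ, 0 ≤ ℓ ∧ CoarsePath ε x y ℓ)
    (hyz : dist y z ≤ ε) : coarseDist ε x z ≤ coarseDist ε x y + dist y z := by
  rw [← sub_le_iff_le_add]
  refine le_csInf hne fun ℓ hℓ => ?_
  rw [sub_le_iff_le_add]
  exact csInf_le ⟨0, fun _ h => h.1⟩ ⟨add_nonneg hℓ.1 dist_nonneg, hℓ.2.extend hℓ.1 hyz⟩

lemma exists_coarsePath [PreconnectedSpace T] {ε : ℝ} (hε : 0 < ε) (x y : T) :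
    ∃ ℓ, 0 ≤ ℓ ∧ CoarsePath ε x y ℓ := by
  set A : Set T := {y | ∃ ℓ, 0 ≤ ℓ ∧ CoarsePath ε x y ℓ}
  have hstep : ∀ y ∈ A, ∀ z, dist y z ≤ ε → z ∈ A := fun y ⟨ℓ, h0, h⟩ z hz =>
    ⟨_, add_nonneg h0 dist_nonneg, h.extend h0 hz⟩
  have hopen : IsOpen A := Metric.isOpen_iff.2 fun y hy =>
    ⟨ε, hε, fun z hz => hstep y hy z (by rw [dist_comm]; exact (mem_ball.1 hz).le)⟩
  have hclosed : IsClosed A := by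
    refine isOpen_compl_iff.1 (Metric.isOpen_iff.2 fun y hy => ⟨ε, hε, fun z hz hzA => hy ?_⟩)
    exact hstep z hzA y (mem_ball.1 hz).le
  have : A = univ := IsClopen.eq_univ ⟨hclosed, hopen⟩ ⟨x, 0, le_rfl, .refl hε.le x⟩
  exact (this.symm ▸ mem_univ y : y ∈ A)

lemma abs_coarseDist_sub_le [PreconnectedSpace T] {ε : ℝ} (hε : 0 < ε) (x : T) {y z : T}
    (hyz : dist y z ≤ ε) : |coarseDist ε x y - coarseDist ε x z| ≤ dist y z := by
  rw [abs_sub_le_iff]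
  have h1 := coarseDist_le_add (exists_coarsePath hε x y) hyz
  have h2 := coarseDist_le_add (exists_coarsePath hε x z) (dist_comm y z ▸ hyz)
  rw [dist_comm z y] at h2
  constructor <;> linarith

lemma isUpperGradient_coarseDist [PreconnectedSpace T] {ε : ℝ} (hε : 0 < ε) (x : T) :
    IsUpperGradient (coarseDist ε x) fun _ => 1 := by
  intro γ
  refine edist_le_lintegral_of_local (F := fun t => coarseDist ε x (γ.toFun t)) γ.hab
    fun t₀ _ => ⟨ε / 2, by positivity, fun t ht t' ht' htb htb' htt' => ?_⟩
  have hd : dist (γ.toFun t) (γ.toFun t') ≤ t' - t := by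
    have := γ.lip.dist_le_mul t ht t' ht'
    rwa [NNReal.coe_one, one_mul, dist_comm t, Real.dist_eq, abs_of_nonneg (by linarith)] at this
  have hε' : t' - t ≤ ε := by
    rw [mem_ball, Real.dist_eq, abs_lt] at htb htb'
    linarith
  rw [edist_dist, Real.dist_eq]
  simp only [lintegral_const, MeasurableSet.univ, Measure.restrict_apply, univ_inter,
    Real.volume_Icc, one_mul]
  exact ENNReal.ofReal_le_ofReal ((abs_coarseDist_sub_le hε x (hd.trans hε')).trans hd)

lemma continuous_coarseDist [PreconnectedSpace T] {ε : ℝ} (hε : 0 < ε) (x : T) :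
    Continuous (coarseDist ε x) := by
  refine Metric.continuous_iff.2 fun y δ hδ => ⟨min ε δ, lt_min hε hδ, fun z hz => ?_⟩
  rw [Real.dist_eq]
  exact (abs_coarseDist_sub_le hε x (hz.le.trans (min_le_left _ _))).trans_lt
    (hz.trans_le (min_le_right _ _))

/-- In a compact space, coarse paths of arbitrarily small error converge to a Lipschitz path. -/
lemma exists_lipschitz_of_coarsePath [CompactSpace T] {x y : T} {ℓ : ℝ}
    (h : ∀ ε > 0, CoarsePath ε x y ℓ) :
    ∃ f : ℝ → T, LipschitzWith 1 f ∧ f 0 = x ∧ f ℓ = y := by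
  have hn : ∀ n : ℕ, CoarsePath (1 / ((n : ℝ) + 1)) x y ℓ := fun n => h _ (by positivity)
  choose f h1 h2 h3 using hn
  let U : Ultrafilter ℕ := hyperfilter ℕ
  have : Nonempty T := ⟨x⟩
  let g : ℝ → T := fun t => (U.map fun n => f n t).lim
  have hg : ∀ t, Tendsto (fun n => f n t) U (𝓝 (g t)) := fun t =>
    (U.map fun n => f n t).le_nhds_lim
  have hU : (U : Filter ℕ) ≤ atTop := by
    rw [← Nat.cofinite_eq_atTop]; exact hyperfilter_le_cofinite
  refine ⟨g, LipschitzWith.of_dist_le_mul fun s t => ?_, ?_, ?_⟩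
  · have hlim : Tendsto (fun n : ℕ => |s - t| + 1 / ((n : ℝ) + 1)) U (𝓝 (|s - t| + 0)) :=
      (tendsto_const_nhds.add tendsto_one_div_add_atTop_nhds_zero_nat).mono_left hU
    have := le_of_tendsto_of_tendsto' ((hg s).dist (hg t)) hlim fun n => h3 n s t
    simpa [Real.dist_eq] using this
  · exact tendsto_nhds_unique (hg 0) (by simp [h1])
  · exact tendsto_nhds_unique (hg ℓ) (by simp [h2])

end CoarsePath

end Duality

namespace Duality

lemma ofReal_abs_average_sub_le {α : Type*} [MeasurableSpace α] {μ : Measure α} {s : Set α}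
    (h0 : μ s ≠ 0) (ht : μ s ≠ ⊤) {u : α → ℝ} (hu : IntegrableOn u s μ) (c : ℝ) :
    ENNReal.ofReal |(⨍ y in s, u y ∂μ) - c| ≤
      (∫⁻ y in s, ENNReal.ofReal |u y - c| ∂μ) / μ s := by
  have hm : (0 : ℝ) < μ.real s := ENNReal.toReal_pos h0 ht
  have hc : IntegrableOn (fun _ : α => c) s μ := integrableOn_const ht
  have : (⨍ y in s, u y ∂μ) - c = (μ.real s)⁻¹ * ∫ y in s, (u y - c) ∂μ := by
    rw [integral_sub hu hc, setAverage_eq, smul_eq_mul, setIntegral_const, smul_eq_mul]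
    field_simp
  rw [this, abs_mul, abs_of_pos (inv_pos.2 hm), ENNReal.ofReal_mul (inv_pos.2 hm).le,
    ENNReal.ofReal_inv_of_pos hm, mul_comm, ← div_eq_mul_inv, Measure.real,
    ENNReal.ofReal_toReal ht]
  gcongr
  have hi : IntegrableOn (fun y => |u y - c|) s μ := (hu.sub hc).abs
  rw [← ofReal_integral_eq_lintegral_ofReal hi (ae_of_all _ fun _ => abs_nonneg _)]
  exact ENNReal.ofReal_le_ofReal (abs_integral_le_integral_abs)

namespace IsPIMeasure

variable {T : Type*} [MetricSpace T] [MeasurableSpace T] {μ : Measure T} {D K : ℝ≥0} {Λ : ℝ}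

lemma isFiniteMeasure (h : IsPIMeasure μ D K Λ) : IsFiniteMeasure μ := ⟨h.measure_univ_lt_top⟩

lemma ball_ne_top (h : IsPIMeasure μ D K Λ) (x : T) (r : ℝ) : μ (ball x r) ≠ ⊤ :=
  ((measure_mono (subset_univ _)).trans_lt h.measure_univ_lt_top).ne

variable [BorelSpace T] [CompactSpace T]

/-- Oscillation of averages of a function with upper gradient `1` over nested balls. -/
lemma exists_abs_average_sub_average_le (h : IsPIMeasure μ D K Λ) :
    ∃ M : ℝ, 0 ≤ M ∧ ∀ u : T → ℝ, Continuous u → IsUpperGradient u (fun _ => 1) →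
      ∀ (x y : T) (s : ℝ), 0 < s → dist y x ≤ s →
        |(⨍ z in ball y s, u z ∂μ) - ⨍ z in ball x (2 * s), u z ∂μ| ≤ M * s := by
  obtain ⟨m, hm⟩ := pow_unbounded_of_one_lt (2 * Λ + 1) (one_lt_two)
  refine ⟨K * 2 * D ^ m, by positivity, fun u hu hug x y s hs hxy => ?_⟩
  have := h.isFiniteMeasure
  have hui : Integrable u μ := hu.integrable_of_hasCompactSupport (.of_compactSpace _)
  have hb0 := (h.ball_pos y s hs).ne'
  have hbt := h.ball_ne_top y s
  have h1 := ofReal_abs_average_sub_le hb0 hbt hui.integrableOn (⨍ z in ball x (2 * s), u z ∂μ)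
  have h2 := h.poincare u (fun _ => 1) hui.locallyIntegrable measurable_const hug x (2 * s)
    (by positivity)
  have h3 : μ (ball x (Λ * (2 * s))) ≤ D ^ m * μ (ball y s) := by
    refine measure_ball_le_pow_mul h.doubling m hs ?_
    rw [dist_comm] at hxy
    nlinarith
  have hsub : ball y s ⊆ ball x (2 * s) := ball_subset_ball' (by linarith)
  rw [setLIntegral_one] at h2
  have hfin : ENNReal.ofReal |(⨍ z in ball y s, u z ∂μ) - ⨍ z in ball x (2 * s), u z ∂μ| ≤
      ENNReal.ofReal (K * 2 * D ^ m * s) := by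
    refine h1.trans (ENNReal.div_le_of_le_mul ?_)
    calc _ ≤ _ := lintegral_mono_set hsub
      _ ≤ _ := h2
      _ ≤ K * ENNReal.ofReal (2 * s) * (D ^ m * μ (ball y s)) := by gcongr
      _ = _ := by
        rw [ENNReal.ofReal_mul (by positivity), ENNReal.ofReal_mul (by positivity),
          ENNReal.ofReal_mul (by positivity), ENNReal.ofReal_mul (by positivity),
          ENNReal.ofReal_pow (by positivity), ENNReal.ofReal_coe_nnreal, ENNReal.ofReal_coe_nnreal]
        ring
  exact (ENNReal.ofReal_le_ofReal_iff (by positivity)).1 hfin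

/-- A locally `1`-Lipschitz function is globally Lipschitz with a constant independent of the
scale at which it is `1`-Lipschitz. -/
lemma exists_abs_sub_le_mul_dist (h : IsPIMeasure μ D K Λ) :
    ∃ M : ℝ, 0 ≤ M ∧ ∀ u : T → ℝ, Continuous u → IsUpperGradient u (fun _ => 1) →
      ∀ ε > 0, (∀ x y, dist x y ≤ ε → |u x - u y| ≤ dist x y) →
        ∀ x y, |u x - u y| ≤ M * dist x y := by
  obtain ⟨M, hM0, hM⟩ := h.exists_abs_average_sub_average_le
  refine ⟨6 * M + 4, by positivity, fun u hu hug ε hε hloc x y => ?_⟩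
  have := h.isFiniteMeasure
  have hui : Integrable u μ := hu.integrable_of_hasCompactSupport (.of_compactSpace _)
  have hsmall : ∀ (z : T) (s : ℝ), 0 < s → s ≤ ε → |(⨍ w in ball z s, u w ∂μ) - u z| ≤ s := by
    intro z s hs hsε
    have h1 := ofReal_abs_average_sub_le (h.ball_pos z s hs).ne' (h.ball_ne_top z s)
      hui.integrableOn (u z)
    refine (ENNReal.ofReal_le_ofReal_iff hs.le).1 (h1.trans (ENNReal.div_le_of_le_mul ?_))
    rw [← setLIntegral_const]
    refine setLIntegral_mono measurable_const fun w hw => ENNReal.ofReal_le_ofReal ?_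
    have hw' : dist w z < s := hw
    exact (hloc w z (hw'.le.trans hsε)).trans hw'.le
  have htel : ∀ (z : T) (r : ℝ), 0 < r → ∀ k : ℕ,
      |(⨍ w in ball z (r / 2 ^ k), u w ∂μ) - ⨍ w in ball z r, u w ∂μ| ≤ M * (r - r / 2 ^ k) := by
    intro z r hr k
    induction k with
    | zero => simp
    | succ k ih =>
      have h1 := hM u hu hug z z (r / 2 ^ (k + 1)) (by positivity)
        (by rw [dist_self]; positivity)
      have h2 : 2 * (r / 2 ^ (k + 1)) = r / 2 ^ k := by rw [pow_succ]; field_simp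
      rw [h2] at h1
      have h3 := abs_sub_le (⨍ w in ball z (r / 2 ^ (k + 1)), u w ∂μ)
        (⨍ w in ball z (r / 2 ^ k), u w ∂μ) (⨍ w in ball z r, u w ∂μ)
      have h4 : M * (r / 2 ^ (k + 1)) + M * (r - r / 2 ^ k) = M * (r - r / 2 ^ (k + 1)) := by
        rw [← h2]; ring
      linarith
  have hpt : ∀ (z : T) (r : ℝ), 0 < r → |u z - ⨍ w in ball z r, u w ∂μ| ≤ (M + 1) * r := by
    intro z r hr
    obtain ⟨k, hk⟩ := pow_unbounded_of_one_lt (r / ε) (one_lt_two)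
    have hk' : r / 2 ^ k ≤ ε := by
      rw [div_lt_iff₀ hε] at hk
      rw [div_le_iff₀ (by positivity)]
      linarith
    have h1 := hsmall z _ (by positivity) hk'
    rw [abs_sub_comm] at h1
    have h2 := htel z r hr k
    have h3 : r / 2 ^ k ≤ r := div_le_self hr.le (one_le_pow₀ one_le_two)
    have h4 : 0 ≤ r / 2 ^ k := by positivity
    have := abs_sub_le (u z) (⨍ w in ball z (r / 2 ^ k), u w ∂μ) (⨍ w in ball z r, u w ∂μ)
    nlinarith
  rcases eq_or_ne x y with rfl | hne
  · simp
  have hd : 0 < dist x y := dist_pos.2 hne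
  have h1 := hpt x _ (by positivity : 0 < 2 * dist x y)
  have h2 := hpt y _ hd
  have h3 := hM u hu hug x y (dist x y) hd (by rw [dist_comm])
  have h4 := abs_sub_le (u x) (⨍ w in ball x (2 * dist x y), u w ∂μ) (u y)
  have h5 := abs_sub_le (⨍ w in ball x (2 * dist x y), u w ∂μ)
    (⨍ w in ball y (dist x y), u w ∂μ) (u y)
  rw [abs_sub_comm] at h2 h3
  nlinarith

/-- A compact connected space supporting a Poincaré inequality is quasiconvex. -/
theorem quasiconvex [PreconnectedSpace T] (h : IsPIMeasure μ D K Λ) :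
    ∃ M : ℝ, 0 < M ∧ ∀ x y : T, ∃ f : ℝ → T, LipschitzWith 1 f ∧ f 0 = x ∧
      f (M * dist x y) = y := by
  obtain ⟨M, hM0, hM⟩ := h.exists_abs_sub_le_mul_dist
  refine ⟨M + 1, by positivity, fun x y => ?_⟩
  rcases eq_or_ne x y with rfl | hne
  · exact ⟨fun _ => x, LipschitzWith.const' _, rfl, rfl⟩
  have hd : 0 < dist x y := dist_pos.2 hne
  refine exists_lipschitz_of_coarsePath fun ε hε =>
    coarsePath_of_coarseDist_lt (exists_coarsePath hε x y) ?_
  have h1 := hM _ (continuous_coarseDist hε x) (isUpperGradient_coarseDist hε x) ε hε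
    (fun y z hyz => abs_coarseDist_sub_le hε x hyz) y x
  rw [coarseDist_self hε.le, sub_zero, dist_comm] at h1
  linarith [le_abs_self (coarseDist ε x y)]

theorem locallyPathConnectedSpace [PreconnectedSpace T] (h : IsPIMeasure μ D K Λ) :
    LocallyPathConnectedSpace T := by
  obtain ⟨M, hM0, hM⟩ := h.quasiconvex
  refine locallyPathConnectedSpace_iff_pathComponentIn_mem_nhds.2 fun x u hu hxu => ?_
  obtain ⟨ε, hε, hsub⟩ := Metric.isOpen_iff.1 hu x hxu
  refine Filter.mem_of_superset (ball_mem_nhds x (by positivity : 0 < ε / M)) fun y hy => ?_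
  obtain ⟨f, hf, h0, h1⟩ := hM x y
  have hd : M * dist x y < ε := by
    rw [mem_ball, dist_comm, lt_div_iff₀ hM0] at hy
    linarith
  refine JoinedIn.ofLine (f := fun t => f (t * (M * dist x y)))
    (hf.continuous.comp (by fun_prop)).continuousOn (by simpa using h0) (by simpa using h1) ?_
  rintro _ ⟨t, ht, rfl⟩
  refine hsub ?_
  have h2 := hf.dist_le_mul (t * (M * dist x y)) 0
  rw [h0, NNReal.coe_one, one_mul, Real.dist_eq, sub_zero, abs_of_nonneg] at h2
  · have : t * (M * dist x y) ≤ 1 * (M * dist x y) := by gcongr; exact ht.2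
    exact mem_ball.2 (by linarith)
  · exact mul_nonneg ht.1 (by positivity)

end IsPIMeasure

end Duality

namespace Duality

lemma locallyPathConnectedSpace_of_isLocalHomeomorph {X Y : Type*} [TopologicalSpace X]
    [TopologicalSpace Y] [LocallyPathConnectedSpace Y] {f : X → Y} (hf : IsLocalHomeomorph f) :
    LocallyPathConnectedSpace X := by
  let _ : ChartedSpace Y X :=
    { atlas := range fun x => (hf x).choose
      chartAt := fun x => (hf x).choose
      mem_chart_source := fun x => (hf x).choose_spec.1
      chart_mem_atlas := fun x => mem_range_self x }
  exact ChartedSpace.locallyPathConnectedSpace Y X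

/-- A lift to the universal cover of a degree 1 map is shifted by `1` by the deck
transformation. -/
lemma lift_deck_eq_add_one {T Tt : Type*} [MetricSpace T] [MetricSpace Tt] [PathConnectedSpace T]
    {x₀ : T} {α₀ : Path x₀ x₀} {π : Tt → T} {τ : Tt → Tt} (hπ : IsCoveringMap π)
    (hτ : IsDeck π x₀ α₀ τ) {φ : T → UnitAddCircle} (hφ : HasDegree x₀ α₀ φ 1)
    {F : Tt → ℝ} (hF : Continuous F) (hFφ : ∀ x, (F x : UnitAddCircle) = φ (π x)) (x : Tt) :
    F (τ x) = F x + 1 := by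
  obtain ⟨hφc, hdeg⟩ := hφ
  let η : Path (π x) x₀ := PathConnectedSpace.somePath _ _
  let γ : Path (π x) (π x) := η.trans (α₀.trans η.symm)
  have hγ : IsDegreeOneLoop x₀ α₀ γ := ⟨η, Path.Homotopic.refl _⟩
  let γt : C(I, Tt) := hπ.liftPath γ x (by simp)
  have hγt : ∀ t, π (γt t) = γ t := fun t => congrFun (hπ.liftPath_lifts γ x (by simp)) t
  have hγt0 : γt 0 = x := hπ.liftPath_zero γ x (by simp)
  have hτx : τ x = γt 1 := by
    have := hτ.2.2 _ γ hγ γt hγt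
    rwa [hγt0] at this
  have hcov : IsCoveringMap ((↑) : ℝ → UnitAddCircle) := AddCircle.isCoveringMap_coe 1
  have hhom : ((γ.map hφc : Path _ _) : C(I, UnitAddCircle)).HomotopicRel
      (stdLoop 1 (φ (π x)) : C(I, UnitAddCircle)) {0, 1} := hdeg _ γ hγ
  have h0 : ((γ.map hφc : Path _ _) : C(I, UnitAddCircle)) 0 = (F x : UnitAddCircle) := by
    simp [hFφ]
  have h1 : (stdLoop 1 (φ (π x)) : C(I, UnitAddCircle)) 0 = (F x : UnitAddCircle) := by
    simp [hFφ]
  have hend := hcov.liftPath_apply_one_eq_of_homotopicRel hhom (F x) h0 h1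
  have hl1 : (⟨fun t => F (γt t), by fun_prop⟩ : C(I, ℝ)) = hcov.liftPath _ (F x) h0 := by
    rw [hcov.eq_liftPath_iff']
    refine ⟨funext fun t => ?_, by simp [hγt0]⟩
    simp [hFφ, hγt]
  have hl2 : (⟨fun t => F x + t, by fun_prop⟩ : C(I, ℝ)) = hcov.liftPath _ (F x) h1 := by
    rw [hcov.eq_liftPath_iff']
    refine ⟨funext fun t => ?_, by simp⟩
    simp [hFφ, stdLoop]
  rw [← hl1, ← hl2] at hend
  simpa [hτx] using hend

lemma exists_lift {T Tt : Type*} [MetricSpace T] [MetricSpace Tt] [LocallyPathConnectedSpace T]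
    {π : Tt → T} (hπ : CoverSetup π) {φ : T → UnitAddCircle} (hφ : Continuous φ) :
    ∃ F : Tt → ℝ, Continuous F ∧ ∀ x, (F x : UnitAddCircle) = φ (π x) := by
  obtain ⟨hcov, -, -, hsc⟩ := hπ
  have := locallyPathConnectedSpace_of_isLocalHomeomorph hcov.isLocalHomeomorph
  obtain ⟨a⟩ := (inferInstance : Nonempty Tt)
  obtain ⟨e, he⟩ := QuotientAddGroup.mk_surjective (φ (π a))
  obtain ⟨F, ⟨-, hF⟩, -⟩ := (AddCircle.isCoveringMap_coe (1 : ℝ)).existsUnique_continuousMap_lifts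
    ⟨fun x => φ (π x), hφ.comp hcov.continuous⟩ a e he
  exact ⟨F, F.continuous, congrFun hF⟩

end Duality

namespace Duality

lemma edist_toReal_le {a b L : ℝ≥0∞} (ha : a ≠ ⊤) (hb : b ≠ ⊤) (hab : a ≤ b + L)
    (hba : b ≤ a + L) : edist a.toReal b.toReal ≤ L := by
  rcases eq_or_ne L ⊤ with rfl | hL
  · exact le_top
  rw [edist_dist, Real.dist_eq, ← ENNReal.ofReal_toReal hL]
  refine ENNReal.ofReal_le_ofReal (abs_sub_le_iff.2 ⟨?_, ?_⟩)
  · have := ENNReal.toReal_mono (by finiteness) hab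
    rw [ENNReal.toReal_add hb hL] at this
    linarith
  · have := ENNReal.toReal_mono (by finiteness) hba
    rw [ENNReal.toReal_add ha hL] at this
    linarith

section BumpFun

variable {T : Type*} [MetricSpace T]

/-- The function which is `1` on `ball c r`, vanishes off `ball c (2 * r)` and is linear in the
distance to `c` in between. -/
def bump (c : T) (r : ℝ) (y : T) : ℝ≥0∞ :=
  min 1 (ENNReal.ofReal (2 * r - dist y c) / ENNReal.ofReal r)

lemma bump_le_one (c : T) (r : ℝ) (y : T) : bump c r y ≤ 1 := min_le_left _ _

lemma bump_eq_one {c y : T} {r : ℝ} (h : y ∈ ball c r) : bump c r y = 1 := by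
  have hr : 0 < r := pos_of_mem_ball h
  refine min_eq_left ?_
  rw [ENNReal.le_div_iff_mul_le (by simp [hr]) (by simp), one_mul]
  refine ENNReal.ofReal_le_ofReal ?_
  have := mem_ball.1 h
  linarith

lemma bump_eq_zero {c y : T} {r : ℝ} (h : y ∉ ball c (2 * r)) : bump c r y = 0 := by
  have : 2 * r - dist y c ≤ 0 := by
    have := not_lt.1 (mt mem_ball.2 h)
    linarith
  rw [bump, ENNReal.ofReal_of_nonpos this, ENNReal.zero_div, min_eq_right zero_le_one]

lemma measurable_bump [MeasurableSpace T] [OpensMeasurableSpace T] (c : T) (r : ℝ) :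
    Measurable (bump c r) := by
  unfold bump
  fun_prop

lemma edist_bump_le (c : T) (r : ℝ) (x y : T) :
    edist (bump c r x).toReal (bump c r y).toReal ≤
      ENNReal.ofReal (dist x y) / ENNReal.ofReal r := by
  have key : ∀ x y : T, bump c r x ≤ bump c r y + ENNReal.ofReal (dist x y) / ENNReal.ofReal r := by
    intro x y
    rcases le_total 1 (ENNReal.ofReal (2 * r - dist y c) / ENNReal.ofReal r) with h | h
    · rw [bump, bump, min_eq_left h]
      exact (min_le_left _ _).trans le_self_add
    · rw [bump, bump, min_eq_right h, ← ENNReal.add_div]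
      refine (min_le_right _ _).trans ?_
      gcongr
      refine (ENNReal.ofReal_le_ofReal ?_).trans ENNReal.ofReal_add_le
      linarith [dist_triangle y x c, dist_comm x y]
  refine edist_toReal_le (ne_top_of_le_ne_top (by simp) (bump_le_one c r x))
    (ne_top_of_le_ne_top (by simp) (bump_le_one c r y)) (key x y) ?_
  rw [dist_comm]
  exact key y x

lemma edist_bump_path_le (c : T) (r : ℝ) (γ : UPath T) {s t : ℝ} (hs : s ∈ Icc γ.a γ.b)
    (ht : t ∈ Icc γ.a γ.b) (hst : s ≤ t) :
    edist (bump c r (γ.toFun s)).toReal (bump c r (γ.toFun t)).toReal ≤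
      γ.integral ((ball c (2 ^ 2 * r)).indicator fun _ => (ENNReal.ofReal r)⁻¹) := by
  rcases le_or_gt r 0 with hr | hr
  · have h : ∀ y, bump c r y = 0 := fun y => bump_eq_zero (by
      rw [ball_eq_empty.2 (by linarith)]; exact notMem_empty _)
    simp [h]
  set g : T → ℝ≥0∞ := (ball c (2 ^ 2 * r)).indicator fun _ => (ENNReal.ofReal r)⁻¹ with hg
  have hsub : Icc s t ⊆ Icc γ.a γ.b := Icc_subset_Icc hs.1 ht.2
  refine (edist_le_lintegral_of_local (F := fun t => (bump c r (γ.toFun t)).toReal)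
    (q := fun t => g (γ.toFun t)) hst fun t₀ ht₀ => ?_).trans
    (lintegral_mono_set hsub)
  refine ⟨r, hr, fun t₁ h₁ t₂ h₂ hb₁ hb₂ h12 => ?_⟩
  have hlip : ∀ x ∈ Icc s t, ∀ y ∈ Icc s t, dist (γ.toFun x) (γ.toFun y) ≤ |x - y| := by
    intro x hx y hy
    have := γ.lip.dist_le_mul x (hsub hx) y (hsub hy)
    simpa [Real.dist_eq] using this
  by_cases hd : dist (γ.toFun t₀) c < 3 * r
  · have hin : ∀ x ∈ Icc t₁ t₂, γ.toFun x ∈ ball c (2 ^ 2 * r) := by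
      intro x hx
      have hxI : x ∈ Icc s t := ⟨h₁.1.trans hx.1, hx.2.trans h₂.2⟩
      have h3 := hlip x hxI t₀ ht₀
      have h4 : |x - t₀| < r := by
        rw [mem_ball, Real.dist_eq, abs_lt] at hb₁ hb₂
        rw [abs_lt]
        constructor <;> linarith [hx.1, hx.2]
      have := dist_triangle (γ.toFun x) (γ.toFun t₀) c
      rw [mem_ball]
      linarith
    calc edist (bump c r (γ.toFun t₁)).toReal (bump c r (γ.toFun t₂)).toReal
        ≤ ENNReal.ofReal (dist (γ.toFun t₁) (γ.toFun t₂)) / ENNReal.ofReal r :=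
          edist_bump_le c r _ _
      _ ≤ ENNReal.ofReal (t₂ - t₁) / ENNReal.ofReal r := by
          gcongr
          refine (hlip _ h₁ _ h₂).trans ?_
          rw [abs_sub_comm, abs_of_nonneg (by linarith)]
      _ = ∫⁻ _ in Icc t₁ t₂, (ENNReal.ofReal r)⁻¹ := by
          rw [setLIntegral_const, Real.volume_Icc, mul_comm, div_eq_mul_inv]
      _ ≤ _ := setLIntegral_mono' measurableSet_Icc fun x hx => by
          rw [hg, indicator_of_mem (hin x hx)]
  · have hz : ∀ x ∈ Icc s t, x ∈ ball t₀ r → bump c r (γ.toFun x) = 0 := by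
      intro x hx hxb
      refine bump_eq_zero fun hmem => hd ?_
      have := dist_triangle (γ.toFun t₀) (γ.toFun x) c
      have h3 := hlip t₀ ht₀ x hx
      rw [mem_ball] at hmem hxb
      rw [dist_comm, Real.dist_eq] at hxb
      linarith
    simp [hz _ h₁ hb₁, hz _ h₂ hb₂]

end BumpFun

lemma UPath.lintegral_eq_top_of_not_inSet {T : Type*} [MetricSpace T] (γ : UPath T)
    (hab : γ.a < γ.b) {z : T} {R : ℝ} (hR : 0 < R) (h : ¬ γ.InSet (ball z (2 * R)))
    {ρ : T → ℝ≥0∞} (hρ : ∀ y ∉ ball z R, ρ y = ⊤) : γ.integral ρ = ⊤ := by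
  simp only [UPath.InSet, not_forall] at h
  obtain ⟨t₀, ht₀, hout⟩ := h
  set J : Set ℝ := Icc (max γ.a (t₀ - R)) (min γ.b (t₀ + R)) with hJ
  have hJsub : J ⊆ Icc γ.a γ.b := Icc_subset_Icc (le_max_left _ _) (min_le_left _ _)
  have hoff : ∀ t ∈ J, ρ (γ.toFun t) = ⊤ := by
    intro t ht
    refine hρ _ fun hmem => hout ?_
    have h1 := γ.lip.dist_le_mul t₀ ht₀ t (hJsub ht)
    have h2 := dist_triangle (γ.toFun t₀) (γ.toFun t) z
    have h3 : |t₀ - t| ≤ R := by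
      rw [abs_le]
      constructor <;> linarith [(max_le_iff.1 ht.1).2, (le_min_iff.1 ht.2).2]
    rw [NNReal.coe_one, one_mul, Real.dist_eq] at h1
    rw [mem_ball] at hmem ⊢
    linarith
  have hvol : 0 < volume J := by
    rw [hJ, Real.volume_Icc, ENNReal.ofReal_pos, sub_pos, lt_min_iff, max_lt_iff, max_lt_iff]
    refine ⟨⟨hab, ?_⟩, ?_, ?_⟩ <;> linarith [ht₀.1, ht₀.2]
  refine top_unique ?_
  calc (⊤ : ℝ≥0∞) = ∫⁻ _ in J, ⊤ := by
        rw [setLIntegral_const, ENNReal.top_mul hvol.ne']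
    _ ≤ ∫⁻ t in J, ρ (γ.toFun t) :=
        setLIntegral_mono' measurableSet_Icc fun t ht => (hoff t ht).ge
    _ ≤ _ := lintegral_mono_set hJsub

lemma codimH_exists_cover {T : Type*} [MetricSpace T] [MeasurableSpace T] {μ : Measure T}
    {A : Set T} {M : ℝ≥0∞} (hA : codimH μ A < M) {δ : ℝ} (hδ : 0 < δ) :
    ∃ (c : ℕ → T) (r : ℕ → ℝ), (∀ i, r i ≤ δ) ∧ A ⊆ ⋃ i, ball (c i) (r i) ∧
      ∑' i, μ (ball (c i) (r i)) / ENNReal.ofReal (r i) < M := by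
  have := (le_iSup₂ (f := fun (δ : ℝ) (_ : 0 < δ) =>
    ⨅ (c : ℕ → T) (r : ℕ → ℝ) (_ : ∀ i, r i ≤ δ) (_ : A ⊆ ⋃ i, ball (c i) (r i)),
      ∑' i, μ (ball (c i) (r i)) / ENNReal.ofReal (r i)) δ hδ).trans_lt hA
  simp only [iInf_lt_iff] at this
  obtain ⟨c, r, h1, h2, h3⟩ := this
  exact ⟨c, r, h1, h2, h3⟩

namespace IsPIMeasure

variable {T : Type*} [MetricSpace T] [MeasurableSpace T] [BorelSpace T] {μ : Measure T}
  {D K : ℝ≥0} {Λ : ℝ}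

/-- Poincaré inequality for the characteristic function of a set whose relative boundary in a ball
is contained, in the sense of paths, in a set of finite codimension 1 measure. -/
theorem exists_lintegral_indicator_sub_le (h : IsPIMeasure μ D K Λ) {S E : Set T}
    (hE : MeasurableSet E) {z : T} {s : ℝ} (hs : 0 < s)
    (hsep : ∀ γ : UPath T, γ.InSet (ball z (2 * (Λ * s))) → ¬ (γ.start ∈ E ↔ γ.finish ∈ E) →
      ∃ t ∈ Icc γ.a γ.b, γ.toFun t ∈ S)
    {M : ℝ≥0∞} (hM : codimH μ (S ∩ ball z (2 * (Λ * s))) < M) {δ : ℝ} (hδ : 0 < δ) :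
    ∃ c : ℝ, ∫⁻ y in ball z s, ENNReal.ofReal |E.indicator (fun _ => (1 : ℝ)) y - c| ∂μ ≤
      (K * ENNReal.ofReal s + ENNReal.ofReal δ) * (D ^ 2 * M) := by
  obtain ⟨x, r, hrδ, hcov, hsum⟩ := codimH_exists_cover hM hδ
  have hfin := h.isFiniteMeasure
  have hΛs : 0 < Λ * s := mul_pos (by linarith [h.one_le_Λ]) hs
  set V := ball z (2 * (Λ * s)) with hV
  set w : T → ℝ≥0∞ := fun y => ⨆ i, bump (x i) (r i) y with hw
  have hw1 : ∀ y, w y ≤ 1 := fun y => iSup_le fun i => bump_le_one _ _ _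
  have hwm : Measurable w := .iSup fun i => measurable_bump _ _
  set v : T → ℝ≥0∞ := E.indicator fun y => 1 - w y with hv
  have hvm : Measurable v := (measurable_const.sub hwm).indicator hE
  have hv1 : ∀ y, v y ≤ 1 := fun y => (indicator_le_self _ _ y).trans tsub_le_self
  have hvt : ∀ y, v y ≠ ⊤ := fun y => ne_top_of_le_ne_top (by simp) (hv1 y)
  set u : T → ℝ := fun y => (v y).toReal with hu
  have hum : Measurable u := hvm.ennreal_toReal
  set g : T → ℝ≥0∞ := fun y =>
    ∑' i, (ball (x i) (2 ^ 2 * r i)).indicator (fun _ => (ENNReal.ofReal (r i))⁻¹) y with hg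
  have hgm : Measurable g := .tsum fun i => measurable_const.indicator measurableSet_ball
  set ρ : T → ℝ≥0∞ := fun y => if dist y z < Λ * s then g y else ⊤ with hρ
  have hρm : Measurable ρ := hgm.ite measurableSet_ball measurable_const
  have hgρ : ∀ y, g y ≤ ρ y := fun y => by
    simp only [hρ]; split_ifs <;> simp
  have hwpath : ∀ (γ : UPath T), ∀ s ∈ Icc γ.a γ.b, ∀ t ∈ Icc γ.a γ.b,
      w (γ.toFun s) ≤ w (γ.toFun t) + γ.integral ρ := by
    intro γ s hs t ht
    refine iSup_le fun i => ?_
    have h1 : edist (bump (x i) (r i) (γ.toFun s)).toReal (bump (x i) (r i) (γ.toFun t)).toReal ≤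
        γ.integral ρ := by
      refine le_trans ?_ (lintegral_mono fun τ => (ENNReal.le_tsum i).trans (hgρ _))
      rcases le_total s t with hst | hst
      · exact edist_bump_path_le _ _ γ hs ht hst
      · rw [edist_comm]
        exact edist_bump_path_le _ _ γ ht hs hst
    have hbt : ∀ y, bump (x i) (r i) y ≠ ⊤ := fun y =>
      ne_top_of_le_ne_top (by simp) (bump_le_one _ _ _)
    have h2 : bump (x i) (r i) (γ.toFun s) ≤ bump (x i) (r i) (γ.toFun t) +
        edist (bump (x i) (r i) (γ.toFun s)).toReal (bump (x i) (r i) (γ.toFun t)).toReal := by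
      rw [edist_dist, ← ENNReal.ofReal_toReal (hbt (γ.toFun s)),
        ← ENNReal.ofReal_toReal (hbt (γ.toFun t)), ENNReal.toReal_ofReal ENNReal.toReal_nonneg,
        ENNReal.toReal_ofReal ENNReal.toReal_nonneg, ← ENNReal.ofReal_add
        ENNReal.toReal_nonneg dist_nonneg]
      refine ENNReal.ofReal_le_ofReal ?_
      rw [Real.dist_eq]
      linarith [le_abs_self ((bump (x i) (r i) (γ.toFun s)).toReal -
        (bump (x i) (r i) (γ.toFun t)).toReal)]
    exact h2.trans (add_le_add (le_iSup (fun i => bump (x i) (r i) (γ.toFun t)) i) h1)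
  have hvpath : ∀ (γ : UPath T), γ.InSet V → ∀ s ∈ Icc γ.a γ.b, ∀ t ∈ Icc γ.a γ.b,
      (γ.toFun s ∈ E → γ.toFun t ∉ E → ∃ t₀ ∈ Icc γ.a γ.b, γ.toFun t₀ ∈ S) →
      v (γ.toFun s) ≤ v (γ.toFun t) + γ.integral ρ := by
    intro γ hγ s hs t ht hcross
    by_cases hsE : γ.toFun s ∈ E
    · by_cases htE : γ.toFun t ∈ E
      · simp only [hv, indicator_of_mem hsE, indicator_of_mem htE]
        rw [tsub_le_iff_right, add_assoc, add_comm (γ.integral ρ)]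
        calc (1 : ℝ≥0∞) ≤ 1 - w (γ.toFun t) + w (γ.toFun t) := le_tsub_add
          _ ≤ _ := by
            gcongr
            exact hwpath γ t ht s hs
      · obtain ⟨t₀, ht₀, hS⟩ := hcross hsE htE
        have h1 : 1 ≤ w (γ.toFun t₀) := by
          obtain ⟨i, hi⟩ := mem_iUnion.1 (hcov ⟨hS, hγ t₀ ht₀⟩)
          rw [← bump_eq_one hi]
          exact le_iSup (fun i => bump (x i) (r i) (γ.toFun t₀)) i
        simp only [hv, indicator_of_mem hsE, indicator_of_notMem htE, zero_add]
        rw [tsub_le_iff_left]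
        exact h1.trans (hwpath γ t₀ ht₀ s hs)
    · simp [hv, hsE]
  have hug : IsUpperGradient u ρ := by
    intro γ
    have ha : γ.a ∈ Icc γ.a γ.b := left_mem_Icc.2 γ.hab
    have hb : γ.b ∈ Icc γ.a γ.b := right_mem_Icc.2 γ.hab
    rcases γ.hab.eq_or_lt with hab | hab
    · simp [UPath.start, UPath.finish, hab]
    by_cases hγ : γ.InSet V
    · refine edist_toReal_le (hvt _) (hvt _) (hvpath γ hγ _ ha _ hb fun h1 h2 => ?_)
        (hvpath γ hγ _ hb _ ha fun h1 h2 => ?_)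
      · exact hsep γ hγ fun h3 => h2 (h3.1 h1)
      · exact hsep γ hγ fun h3 => h2 (h3.2 h1)
    · have hoff : ∀ y ∉ ball z (Λ * s), ρ y = ⊤ := fun y hy => if_neg hy
      rw [γ.lintegral_eq_top_of_not_inSet hab hΛs hγ hoff]
      exact le_top
  have hui : Integrable u μ := by
    refine Integrable.of_bound hum.aestronglyMeasurable 1 (ae_of_all _ fun y => ?_)
    rw [Real.norm_of_nonneg ENNReal.toReal_nonneg]
    exact ENNReal.toReal_mono (by simp) (hv1 y)
  set m := ⨍ y in ball z s, u y ∂μ with hm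
  have hP := h.poincare u ρ hui.locallyIntegrable hρm hug z s hs
  have hball : ∀ i, μ (ball (x i) (2 ^ 2 * r i)) ≤ D ^ 2 * μ (ball (x i) (r i)) := by
    intro i
    rcases le_or_gt (r i) 0 with hr | hr
    · rw [ball_eq_empty.2 (by linarith)]; simp
    · exact measure_ball_two_pow_le h.doubling 2 _ hr
  have hgint : ∫⁻ y in ball z (Λ * s), ρ y ∂μ ≤ D ^ 2 * M := by
    calc ∫⁻ y in ball z (Λ * s), ρ y ∂μ = ∫⁻ y in ball z (Λ * s), g y ∂μ :=
          setLIntegral_congr_fun measurableSet_ball fun y hy => if_pos hy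
      _ ≤ ∫⁻ y, g y ∂μ := setLIntegral_le_lintegral _ _
      _ = ∑' i, (ENNReal.ofReal (r i))⁻¹ * μ (ball (x i) (2 ^ 2 * r i)) := by
          rw [lintegral_tsum fun i =>
            (measurable_const.indicator measurableSet_ball).aemeasurable]
          simp [lintegral_indicator_const measurableSet_ball]
      _ ≤ ∑' i, D ^ 2 * (μ (ball (x i) (r i)) / ENNReal.ofReal (r i)) := by
          refine ENNReal.tsum_le_tsum fun i => ?_
          rw [mul_comm, ← div_eq_mul_inv, ← mul_div_assoc]
          gcongr
          exact hball i
      _ ≤ _ := by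
          rw [ENNReal.tsum_mul_left]
          gcongr
  have hcovmeas : ∫⁻ y, w y ∂μ ≤ ENNReal.ofReal δ * (D ^ 2 * M) := by
    calc ∫⁻ y, w y ∂μ ≤ ∫⁻ y, ∑' i, (ball (x i) (2 ^ 2 * r i)).indicator (fun _ => 1) y ∂μ := by
          refine lintegral_mono fun y => iSup_le fun i => le_trans ?_ (ENNReal.le_tsum i)
          by_cases hy : y ∈ ball (x i) (2 * r i)
          · have hr := pos_of_mem_ball hy
            rw [indicator_of_mem (ball_subset_ball (by linarith) hy)]
            exact bump_le_one _ _ _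
          · rw [bump_eq_zero hy]
            exact zero_le
      _ = ∑' i, μ (ball (x i) (2 ^ 2 * r i)) := by
          rw [lintegral_tsum fun i =>
            (measurable_const.indicator measurableSet_ball).aemeasurable]
          simp [lintegral_indicator_const measurableSet_ball]
      _ ≤ ∑' i, ENNReal.ofReal δ * D ^ 2 * (μ (ball (x i) (r i)) / ENNReal.ofReal (r i)) := by
          refine ENNReal.tsum_le_tsum fun i => (hball i).trans ?_
          rcases le_or_gt (r i) 0 with hr | hr
          · rw [ball_eq_empty.2 (by linarith)]; simp
          · rw [mul_comm (ENNReal.ofReal δ), mul_assoc]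
            gcongr
            calc μ (ball (x i) (r i))
                = ENNReal.ofReal (r i) * (μ (ball (x i) (r i)) / ENNReal.ofReal (r i)) := by
                  rw [ENNReal.mul_div_cancel (by simp [hr]) (by simp)]
              _ ≤ _ := by gcongr; exact hrδ i
      _ ≤ _ := by
          rw [ENNReal.tsum_mul_left, ← mul_assoc]
          gcongr
  refine ⟨m, ?_⟩
  calc ∫⁻ y in ball z s, ENNReal.ofReal |E.indicator (fun _ => (1 : ℝ)) y - m| ∂μ
      ≤ ∫⁻ y in ball z s, (ENNReal.ofReal |u y - m| + w y) ∂μ := by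
        refine lintegral_mono fun y => ?_
        have hwt : w y ≠ ⊤ := ne_top_of_le_ne_top (by simp) (hw1 y)
        rw [← ENNReal.ofReal_toReal hwt, ← ENNReal.ofReal_add (abs_nonneg _)
          ENNReal.toReal_nonneg]
        refine ENNReal.ofReal_le_ofReal ?_
        have hE : |E.indicator (fun _ => (1 : ℝ)) y - u y| ≤ (w y).toReal := by
          by_cases hyE : y ∈ E
          · simp only [hu, hv, indicator_of_mem hyE]
            rw [ENNReal.toReal_sub_of_le (hw1 y) (by simp)]
            simp
          · simp [hu, hv, hyE]
        have := abs_sub_le (E.indicator (fun _ => (1 : ℝ)) y) (u y) m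
        linarith
    _ = (∫⁻ y in ball z s, ENNReal.ofReal |u y - m| ∂μ) + ∫⁻ y in ball z s, w y ∂μ :=
        lintegral_add_right _ hwm
    _ ≤ K * ENNReal.ofReal s * (D ^ 2 * M) + ENNReal.ofReal δ * (D ^ 2 * M) := by
        gcongr
        · exact hP.trans (by gcongr)
        · exact (setLIntegral_le_lintegral _ _).trans hcovmeas
    _ = _ := by ring

end IsPIMeasure

end Duality

namespace Duality

section Kernel

variable {T : Type*} [MetricSpace T]

/-- The tent function of radius `r` centred at `z`. -/
def tent (r : ℝ) (z y : T) : ℝ := max 0 (1 - dist z y / r)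

lemma tent_nonneg (r : ℝ) (z y : T) : 0 ≤ tent r z y := le_max_left _ _

lemma tent_le_one {r : ℝ} (hr : 0 < r) (z y : T) : tent r z y ≤ 1 :=
  max_le zero_le_one (by linarith [div_nonneg (dist_nonneg (x := z) (y := y)) hr.le])

lemma tent_eq_zero {r : ℝ} (hr : 0 < r) {z y : T} (h : y ∉ ball z r) : tent r z y = 0 := by
  refine max_eq_left (sub_nonpos.2 ((one_le_div hr).2 ?_))
  rw [dist_comm]
  exact not_lt.1 h

lemma abs_tent_sub_le {r : ℝ} (hr : 0 < r) (z z' y : T) :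
    |tent r z' y - tent r z y| ≤ dist z z' / r := by
  have h1 := abs_max_sub_max_le_abs (1 - dist z' y / r) (1 - dist z y / r) 0
  rw [max_comm _ 0, max_comm _ 0] at h1
  refine h1.trans ?_
  rw [sub_sub_sub_cancel_left, ← sub_div, abs_div, abs_of_pos hr]
  gcongr
  exact abs_dist_sub_le _ _ _

lemma continuous_tent (r : ℝ) (z : T) : Continuous (tent r z) := by
  unfold tent
  fun_prop

variable [MeasurableSpace T]

/-- The average of `g` against the tent function of radius `r` centred at `z`. -/
def tentAvg (μ : Measure T) (r : ℝ) (z : T) (g : T → ℝ) : ℝ :=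
  (∫ y, tent r z y * g y ∂μ) / ∫ y, tent r z y ∂μ

lemma integrable_tent_mul [BorelSpace T] {μ : Measure T} {r : ℝ} (hr : 0 < r) (z : T) {g : T → ℝ}
    (hg : Integrable g μ) : Integrable (fun y => tent r z y * g y) μ :=
  hg.bdd_mul (continuous_tent r z).aestronglyMeasurable (c := 1) (ae_of_all _ fun y => by
    rw [Real.norm_of_nonneg (tent_nonneg _ _ _)]; exact tent_le_one hr _ _)

end Kernel

namespace IsPIMeasure

variable {T : Type*} [MetricSpace T] [MeasurableSpace T] {μ : Measure T} {D K : ℝ≥0} {Λ : ℝ}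

lemma measureReal_ball_le_pow_mul (h : IsPIMeasure μ D K Λ) (k : ℕ) {x y : T} {r R : ℝ}
    (hr : 0 < r) (hR : R + dist x y ≤ 2 ^ k * r) :
    μ.real (ball x R) ≤ D ^ k * μ.real (ball y r) := by
  have := measure_ball_le_pow_mul h.doubling k hr hR
  have := ENNReal.toReal_mono (ENNReal.mul_ne_top (by simp) (h.ball_ne_top y r)) this
  simpa [Measure.real] using this

lemma measureReal_ball_pos (h : IsPIMeasure μ D K Λ) (x : T) {r : ℝ} (hr : 0 < r) :
    0 < μ.real (ball x r) := ENNReal.toReal_pos (h.ball_pos x r hr).ne' (h.ball_ne_top x r)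

variable [BorelSpace T]

lemma integrable_tent (h : IsPIMeasure μ D K Λ) {r : ℝ} (hr : 0 < r) (z : T) :
    Integrable (tent r z) μ := by
  have := h.isFiniteMeasure
  simpa using integrable_tent_mul hr z (integrable_const (1 : ℝ))

lemma measureReal_ball_half_le_integral_tent (h : IsPIMeasure μ D K Λ) {r : ℝ} (hr : 0 < r)
    (z : T) : μ.real (ball z (r / 2)) ≤ 2 * ∫ y, tent r z y ∂μ := by
  have := h.isFiniteMeasure
  rw [← integral_indicator_one measurableSet_ball, ← integral_const_mul]
  refine integral_mono ((integrable_const (1 : ℝ)).indicator measurableSet_ball)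
    ((h.integrable_tent hr z).const_mul 2) fun y => ?_
  by_cases hy : y ∈ ball z (r / 2)
  · simp only [indicator_of_mem hy, Pi.one_apply]
    have h1 : dist z y / r ≤ 1 / 2 := by
      rw [div_le_iff₀ hr]
      rw [mem_ball, dist_comm] at hy
      linarith
    have := le_max_right 0 (1 - dist z y / r)
    change _ ≤ tent r z y at this
    linarith
  · simp only [indicator_of_notMem hy]
    linarith [tent_nonneg r z y]

lemma tentAvg_sub_const (h : IsPIMeasure μ D K Λ) {r : ℝ} (hr : 0 < r) (z : T) {g : T → ℝ}
    (hg : Integrable g μ) (c : ℝ) :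
    tentAvg μ r z (fun y => g y - c) = tentAvg μ r z g - c := by
  have hA : 0 < ∫ y, tent r z y ∂μ := by
    have h1 := h.measureReal_ball_half_le_integral_tent hr z
    have h2 := h.measureReal_ball_pos z (half_pos hr)
    linarith
  simp only [tentAvg, mul_sub]
  rw [integral_sub (integrable_tent_mul hr z hg) ((h.integrable_tent hr z).mul_const c),
    integral_mul_const, sub_div, mul_div_cancel_left₀ _ hA.ne']

lemma abs_tentAvg_sub_tentAvg_le (h : IsPIMeasure μ D K Λ) {z z' : T} {r : ℝ}
    (hd : dist z z' < r) {g : T → ℝ} (hg : Integrable g μ) (c : ℝ) :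
    |tentAvg μ r z g - tentAvg μ r z' g| ≤
      (2 * D + 4 * D ^ 4) * (dist z z' / r) / μ.real (ball z r) *
        ∫ y in ball z (2 * r), |g y - c| ∂μ := by
  have hr : 0 < r := dist_nonneg.trans_lt hd
  have := h.isFiniteMeasure
  rw [← sub_sub_sub_cancel_right _ _ c, ← h.tentAvg_sub_const hr z hg c,
    ← h.tentAvg_sub_const hr z' hg c]
  have hG : Integrable (fun y => g y - c) μ := hg.sub (integrable_const c)
  set G : T → ℝ := fun y => g y - c with hGdef
  set J := ∫ y in ball z (2 * r), |G y| ∂μ with hJ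
  set m := μ.real (ball z r) with hm
  have hm0 : 0 < m := h.measureReal_ball_pos z hr
  have hD1 : (1 : ℝ) ≤ D := by exact_mod_cast h.one_le_D
  set e := dist z z' / r with he
  have he0 : 0 ≤ e := by positivity
  have hout : ∀ y ∉ ball z (2 * r), tent r z y = 0 ∧ tent r z' y = 0 := by
    refine fun y hy => ⟨tent_eq_zero hr fun hy' => hy ?_, tent_eq_zero hr fun hy' => hy ?_⟩
    · exact ball_subset_ball (by linarith) hy'
    · rw [dist_comm] at hd
      exact ball_subset_ball' (by linarith) hy'
  have hJ' : J = ∫ y, (ball z (2 * r)).indicator (fun y => |G y|) y ∂μ := by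
    rw [hJ, integral_indicator measurableSet_ball]
  have hJint : Integrable ((ball z (2 * r)).indicator fun y => |G y|) μ :=
    hG.abs.indicator measurableSet_ball
  have hN : |(∫ y, tent r z y * G y ∂μ) - ∫ y, tent r z' y * G y ∂μ| ≤ e * J := by
    rw [← integral_sub (integrable_tent_mul hr z hG) (integrable_tent_mul hr z' hG),
      hJ', ← integral_const_mul]
    refine (abs_integral_le_integral_abs).trans (integral_mono ?_ (hJint.const_mul _) fun y => ?_)
    · exact ((integrable_tent_mul hr z hG).sub (integrable_tent_mul hr z' hG)).abs
    · by_cases hy : y ∈ ball z (2 * r)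
      · simp only [indicator_of_mem hy]
        rw [← sub_mul, abs_mul, abs_sub_comm]
        gcongr
        exact abs_tent_sub_le hr z z' y
      · simp [hout y hy, hy]
  have hN' : |∫ y, tent r z' y * G y ∂μ| ≤ J := by
    rw [hJ']
    refine (abs_integral_le_integral_abs).trans
      (integral_mono (integrable_tent_mul hr z' hG).abs hJint fun y => ?_)
    by_cases hy : y ∈ ball z (2 * r)
    · simp only [indicator_of_mem hy]
      rw [abs_mul, abs_of_nonneg (tent_nonneg _ _ _)]
      exact mul_le_of_le_one_left (abs_nonneg _) (tent_le_one hr _ _)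
    · simp [hout y hy, hy]
  have hAA : |(∫ y, tent r z' y ∂μ) - ∫ y, tent r z y ∂μ| ≤ e * (D * m) := by
    have h1 : μ.real (ball z (2 * r)) ≤ D * m := by
      simpa using h.measureReal_ball_le_pow_mul 1 (x := z) (y := z) (R := 2 * r) hr (by simp)
    rw [← integral_sub (h.integrable_tent hr z') (h.integrable_tent hr z)]
    refine le_trans ?_ (mul_le_mul_of_nonneg_left h1 he0)
    rw [← integral_indicator_one measurableSet_ball, ← integral_const_mul]
    refine (abs_integral_le_integral_abs).trans (integral_mono
      ((h.integrable_tent hr z').sub (h.integrable_tent hr z)).abs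
      (((integrable_const (1 : ℝ)).indicator measurableSet_ball).const_mul _) fun y => ?_)
    by_cases hy : y ∈ ball z (2 * r)
    · simp only [indicator_of_mem hy, Pi.one_apply, mul_one]
      exact abs_tent_sub_le hr z z' y
    · simp [hout y hy, hy]
  have hA : m ≤ 2 * D * ∫ y, tent r z y ∂μ := by
    have h1 := h.measureReal_ball_half_le_integral_tent hr z
    have h2 := h.measureReal_ball_le_pow_mul 1 (x := z) (y := z) (R := r) (half_pos hr)
      (by simp; linarith)
    rw [pow_one] at h2
    nlinarith
  have hA' : m ≤ 2 * D ^ 2 * ∫ y, tent r z' y ∂μ := by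
    have h1 := h.measureReal_ball_half_le_integral_tent hr z'
    have h2 := h.measureReal_ball_le_pow_mul 2 (x := z) (y := z') (R := r) (half_pos hr)
      (by linarith)
    have : (0 : ℝ) < (D : ℝ) ^ 2 := by positivity
    nlinarith
  unfold tentAvg
  set A := ∫ y, tent r z y ∂μ
  set A' := ∫ y, tent r z' y ∂μ
  set P := ∫ y, tent r z y * G y ∂μ
  set P' := ∫ y, tent r z' y * G y ∂μ
  have hJ0 : 0 ≤ J := (abs_nonneg _).trans hN'
  have hA0 : 0 < A := by
    by_contra hcon
    have : 2 * (D : ℝ) * A ≤ 0 := mul_nonpos_of_nonneg_of_nonpos (by positivity) (not_lt.1 hcon)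
    linarith
  have hA0' : 0 < A' := by
    by_contra hcon
    have : 2 * (D : ℝ) ^ 2 * A' ≤ 0 :=
      mul_nonpos_of_nonneg_of_nonpos (by positivity) (not_lt.1 hcon)
    linarith
  have hi : 1 / A ≤ 2 * D / m := by
    rw [div_le_div_iff₀ hA0 hm0]; linarith
  have hi' : 1 / A' ≤ 2 * D ^ 2 / m := by
    rw [div_le_div_iff₀ hA0' hm0]; linarith
  have heq : P / A - P' / A' = (P - P') * (1 / A) + P' * (A' - A) * ((1 / A) * (1 / A')) := by
    field_simp
    ring
  rw [heq]
  calc |(P - P') * (1 / A) + P' * (A' - A) * ((1 / A) * (1 / A'))|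
      ≤ |(P - P') * (1 / A)| + |P' * (A' - A) * ((1 / A) * (1 / A'))| := abs_add_le _ _
    _ = |P - P'| * (1 / A) + |P'| * |A' - A| * ((1 / A) * (1 / A')) := by
        rw [abs_mul, abs_mul, abs_mul, abs_of_pos (by positivity : 0 < 1 / A),
          abs_of_pos (by positivity : 0 < 1 / A * (1 / A'))]
    _ ≤ (e * J) * (2 * D / m) + J * (e * (D * m)) * ((2 * D / m) * (2 * D ^ 2 / m)) := by
        gcongr
    _ = _ := by
        field_simp
        ring

/-- Variation of tent averages of a function which locally jumps only across `S`. -/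
theorem edist_tentAvg_le (h : IsPIMeasure μ D K Λ) {S E : Set T} (hE : MeasurableSet E)
    {z z' : T} {r : ℝ} (hd : dist z z' < r) {g : T → ℝ} (hg : Integrable g μ) {a : ℝ}
    (hgE : ∀ y ∈ ball z (2 * r), g y = a + E.indicator (fun _ => (1 : ℝ)) y)
    (hsep : ∀ γ : UPath T, γ.InSet (ball z (4 * Λ * r)) → ¬ (γ.start ∈ E ↔ γ.finish ∈ E) →
      ∃ t ∈ Icc γ.a γ.b, γ.toFun t ∈ S)
    (hS : codimH μ (S ∩ ball z (4 * Λ * r)) ≠ ⊤) :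
    edist (tentAvg μ r z g) (tentAvg μ r z' g) ≤
      ((2 * D + 4 * D ^ 4) * (2 * K * D ^ 2) : ℝ≥0) * edist z z' / μ (ball z r) *
        codimH μ (S ∩ ball z (4 * Λ * r)) := by
  have hr : 0 < r := dist_nonneg.trans_lt hd
  have := h.isFiniteMeasure
  have hrad : 4 * Λ * r = 2 * (Λ * (2 * r)) := by ring
  rw [hrad] at hsep hS ⊢
  set H := codimH μ (S ∩ ball z (2 * (Λ * (2 * r)))) with hH
  have hm0 : μ (ball z r) ≠ 0 := (h.ball_pos z r hr).ne'
  have hmt := h.ball_ne_top z r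
  set C₁ : ℝ≥0 := 2 * D + 4 * D ^ 4 with hC₁
  set q : ℝ≥0∞ := C₁ * (edist z z' / ENNReal.ofReal r) / μ (ball z r) with hq
  have hqt : q ≠ ⊤ := by
    refine ENNReal.div_ne_top (ENNReal.mul_ne_top (by simp) (ENNReal.div_ne_top ?_ ?_)) hm0
    · exact edist_ne_top _ _
    · simpa using hr
  have hstep : ∀ δ : ℝ, 0 < δ → edist (tentAvg μ r z g) (tentAvg μ r z' g) ≤
      q * ((K * ENNReal.ofReal (2 * r) + ENNReal.ofReal δ) *
        (D ^ 2 * (H + ENNReal.ofReal δ))) := by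
    intro δ hδ
    obtain ⟨c, hc⟩ := h.exists_lintegral_indicator_sub_le hE (z := z) (s := 2 * r) (by positivity)
      hsep (M := H + ENNReal.ofReal δ)
      (ENNReal.lt_add_right hS (by simpa using hδ)) hδ
    have h1 := h.abs_tentAvg_sub_tentAvg_le hd hg (a + c)
    have hui : IntegrableOn (fun y => |g y - (a + c)|) (ball z (2 * r)) μ :=
      (hg.sub (integrable_const _)).abs.integrableOn
    rw [edist_dist, Real.dist_eq]
    refine (ENNReal.ofReal_le_ofReal h1).trans ?_
    rw [ENNReal.ofReal_mul (by positivity), ENNReal.ofReal_div_of_pos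
      (h.measureReal_ball_pos z hr), ENNReal.ofReal_mul (by positivity), ENNReal.ofReal_div_of_pos
      hr, ← edist_dist, Measure.real, ENNReal.ofReal_toReal hmt,
      ofReal_integral_eq_lintegral_ofReal hui (ae_of_all _ fun _ => abs_nonneg _)]
    have h2 : ENNReal.ofReal (2 * D + 4 * D ^ 4) = C₁ := by
      rw [← ENNReal.ofReal_coe_nnreal, hC₁]
      push_cast
      rfl
    rw [h2]
    gcongr
    refine le_trans (le_of_eq ?_) hc
    refine setLIntegral_congr_fun measurableSet_ball fun y hy => ?_
    simp only [hgE y hy]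
    congr 2
    ring
  have hlim : Tendsto (fun δ : ℝ => q * ((K * ENNReal.ofReal (2 * r) + ENNReal.ofReal δ) *
        (D ^ 2 * (H + ENNReal.ofReal δ)))) (𝓝[>] 0)
      (𝓝 (q * ((K * ENNReal.ofReal (2 * r) + 0) * (D ^ 2 * (H + 0))))) := by
    have h0 : Tendsto (fun δ : ℝ => ENNReal.ofReal δ) (𝓝[>] 0) (𝓝 0) := by
      simpa using (ENNReal.continuous_ofReal.tendsto 0).mono_left nhdsWithin_le_nhds
    refine ENNReal.Tendsto.const_mul (ENNReal.Tendsto.mul (tendsto_const_nhds.add h0)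
      (Or.inr ?_) (ENNReal.Tendsto.const_mul (tendsto_const_nhds.add h0) (Or.inr ?_))
      (Or.inr ?_)) (Or.inr hqt)
    · finiteness
    · finiteness
    · finiteness
  refine (ge_of_tendsto hlim (eventually_nhdsWithin_of_forall hstep)).trans (le_of_eq ?_)
  have hr0 : ENNReal.ofReal r ≠ 0 := by simpa using hr
  rw [add_zero, add_zero, hq, ENNReal.ofReal_mul two_pos.le, ENNReal.ofReal_ofNat]
  push_cast
  simp only [div_eq_mul_inv]
  calc _ = (C₁ : ℝ≥0∞) * edist z z' * (μ (ball z r))⁻¹ * (2 * K * D ^ 2) * H *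
        (ENNReal.ofReal r * (ENNReal.ofReal r)⁻¹) := by ring
    _ = _ := by
      rw [ENNReal.mul_inv_cancel hr0 (by simp), hC₁]
      push_cast
      ring

end IsPIMeasure

end Duality

namespace Duality

section CodimH

variable {T : Type*} [MetricSpace T] [MeasurableSpace T] {μ : Measure T}

/-- The codimension 1 spherical Hausdorff content at scale `δ`. -/
def codimContent (μ : Measure T) (δ : ℝ) (A : Set T) : ℝ≥0∞ :=
  ⨅ (c : ℕ → T) (r : ℕ → ℝ) (_ : ∀ i, r i ≤ δ) (_ : A ⊆ ⋃ i, ball (c i) (r i)),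
    ∑' i, μ (ball (c i) (r i)) / ENNReal.ofReal (r i)

lemma codimContent_le {δ : ℝ} {A : Set T} {c : ℕ → T} {r : ℕ → ℝ} (hr : ∀ i, r i ≤ δ)
    (hA : A ⊆ ⋃ i, ball (c i) (r i)) :
    codimContent μ δ A ≤ ∑' i, μ (ball (c i) (r i)) / ENNReal.ofReal (r i) :=
  iInf₂_le_of_le c r (iInf₂_le hr hA)

lemma codimContent_mono {δ : ℝ} {A B : Set T} (h : A ⊆ B) :
    codimContent μ δ A ≤ codimContent μ δ B :=
  le_iInf₂ fun _ _ => le_iInf₂ fun hr hB => codimContent_le hr (h.trans hB)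

lemma codimContent_anti {δ δ' : ℝ} (h : δ ≤ δ') (A : Set T) :
    codimContent μ δ' A ≤ codimContent μ δ A :=
  le_iInf₂ fun _ _ => le_iInf₂ fun hr hA => codimContent_le (fun i => (hr i).trans h) hA

lemma codimContent_le_codimH {δ : ℝ} (hδ : 0 < δ) (A : Set T) :
    codimContent μ δ A ≤ codimH μ A :=
  le_iSup₂ (f := fun (δ : ℝ) (_ : 0 < δ) => codimContent μ δ A) δ hδ

lemma codimH_mono {A B : Set T} (h : A ⊆ B) : codimH μ A ≤ codimH μ B :=
  iSup₂_mono fun _ _ => codimContent_mono h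

lemma codimH_eq_iSup (A : Set T) :
    codimH μ A = ⨆ δ : {δ : ℝ // 0 < δ}, codimContent μ δ A :=
  iSup_subtype'

/-- The codimension 1 Hausdorff measures of pieces of a set cut out by balls of bounded overlap
add up to at most a multiple of the measure of the set. -/
lemma sum_codimH_inter_ball_le (s : Finset T) {R r : ℝ} (hr : 0 < r) {N : ℝ≥0∞}
    (hN : ∀ c : T, ((s.filter fun x => dist c x < R + r).card : ℝ≥0∞) ≤ N) (A : Set T) :
    ∑ x ∈ s, codimH μ (A ∩ ball x R) ≤ N * codimH μ A := by
  simp_rw [codimH_eq_iSup (A ∩ _)]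
  have hdir : ∀ i j : {δ : ℝ // 0 < δ}, ∃ k : {δ : ℝ // 0 < δ}, ∀ x : T,
      codimContent μ i (A ∩ ball x R) ≤ codimContent μ k (A ∩ ball x R) ∧
        codimContent μ j (A ∩ ball x R) ≤ codimContent μ k (A ∩ ball x R) := by
    rintro ⟨i, hi⟩ ⟨j, hj⟩
    exact ⟨⟨min i j, lt_min hi hj⟩, fun x =>
      ⟨codimContent_anti (min_le_left i j) _, codimContent_anti (min_le_right i j) _⟩⟩
  rw [ENNReal.finsetSum_iSup hdir]
  refine iSup_le fun ⟨δ, hδ⟩ => ?_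
  have hδ' : 0 < min δ r := lt_min hδ hr
  calc ∑ x ∈ s, codimContent μ δ (A ∩ ball x R)
      ≤ ∑ x ∈ s, codimContent μ (min δ r) (A ∩ ball x R) :=
        Finset.sum_le_sum fun x _ => codimContent_anti (min_le_left _ _) _
    _ ≤ N * codimContent μ (min δ r) A := by
        rcases eq_or_ne N 0 with rfl | hN0
        · have hs : ∀ x ∈ s, R + r ≤ 0 := by
            intro x hx
            by_contra hcon
            have h1 := hN x
            rw [nonpos_iff_eq_zero, Nat.cast_eq_zero, Finset.card_eq_zero,
              Finset.filter_eq_empty_iff] at h1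
            exact h1 hx (by rw [dist_self]; exact not_le.1 hcon)
          refine (Finset.sum_le_sum fun x hx => ?_).trans (by simp)
            (b := ∑ x ∈ s, (0 : ℝ≥0∞))
          have hemp : A ∩ ball x R = ∅ := by
            rw [ball_eq_empty.2 (by linarith [hs x hx]), inter_empty]
          rw [hemp]
          refine (codimContent_le (c := fun _ => x) (r := fun _ => 0) (fun _ => hδ'.le)
            (empty_subset _)).trans (by simp)
        rcases eq_or_ne N ⊤ with rfl | hNt
        · rcases eq_or_ne (codimContent μ (min δ r) A) 0 with h0 | h0
          · rw [h0, mul_zero, ← Finset.sum_const_zero (s := s)]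
            exact Finset.sum_le_sum fun x _ => h0 ▸ codimContent_mono inter_subset_left
          · rw [ENNReal.top_mul h0]; exact le_top
        rw [codimContent, ENNReal.mul_iInf_of_ne hN0 hNt]
        refine le_iInf fun c => ?_
        rw [ENNReal.mul_iInf_of_ne hN0 hNt]
        refine le_iInf fun ρ => ?_
        rw [ENNReal.mul_iInf_of_ne hN0 hNt]
        refine le_iInf fun hρ => ?_
        rw [ENNReal.mul_iInf_of_ne hN0 hNt]
        refine le_iInf fun hA => ?_
        let v : ℕ → ℝ≥0∞ := fun j => μ (ball (c j) (ρ j)) / ENNReal.ofReal (ρ j)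
        have hpiece : ∀ x ∈ s, codimContent μ (min δ r) (A ∩ ball x R) ≤
            ∑' j, if dist (c j) x < R + r then v j else 0 := by
          intro x hx
          refine (codimContent_le (c := c)
            (r := fun j => if dist (c j) x < R + r then ρ j else 0) ?_ ?_).trans
            (ENNReal.tsum_le_tsum fun j => ?_)
          · intro j
            split_ifs
            exacts [hρ j, hδ'.le]
          · rintro y ⟨hyA, hyx⟩
            obtain ⟨j, hj⟩ := mem_iUnion.1 (hA hyA)
            refine mem_iUnion.2 ⟨j, ?_⟩
            rw [if_pos]
            · exact hj
            · have h1 := dist_triangle (c j) y x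
              have h2 := (hρ j).trans (min_le_right _ _)
              rw [mem_ball] at hj hyx
              rw [dist_comm] at hj
              linarith
          · split_ifs <;> simp [v]
        calc ∑ x ∈ s, codimContent μ (min δ r) (A ∩ ball x R)
            ≤ ∑ x ∈ s, ∑' j, (if dist (c j) x < R + r then v j else 0) :=
              Finset.sum_le_sum hpiece
          _ = ∑' j, ∑ x ∈ s, (if dist (c j) x < R + r then v j else 0) :=
              (Summable.tsum_finsetSum fun _ _ => ENNReal.summable).symm
          _ ≤ ∑' j, N * v j := ENNReal.tsum_le_tsum fun j => by
              rw [← Finset.sum_filter, Finset.sum_const, nsmul_eq_mul]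
              gcongr
              exact hN _
          _ = _ := ENNReal.tsum_mul_left
    _ ≤ _ := by
        gcongr
        exact codimContent_le_codimH hδ' _

lemma measurable_codimH_superlevel (S : Set T) (g : T → ℝ≥0∞) :
    Measurable fun t : ℝ => codimH μ {x | x ∈ S ∧ ENNReal.ofReal t < g x} :=
  Antitone.measurable fun _ _ hst => codimH_mono fun _ hx =>
    ⟨hx.1, (ENNReal.ofReal_le_ofReal hst).trans_lt hx.2⟩

lemma mul_codimH_le_choquetIntegral {A : Set T} {g : T → ℝ≥0∞} {m : ℝ≥0∞}
    (h : ∀ y ∈ A, m ≤ g y) : m * codimH μ A ≤ choquetIntegral μ A g := by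
  have hm : m = volume (Ioi (0 : ℝ) ∩ {t | ENNReal.ofReal t < m}) := by
    rcases eq_or_ne m ⊤ with rfl | hm
    · simp
    · have : Ioi (0 : ℝ) ∩ {t | ENNReal.ofReal t < m} = Ioo 0 m.toReal := by
        ext t
        simp only [mem_inter_iff, mem_Ioi, mem_ofPred_eq, mem_Ioo, and_congr_right_iff]
        intro ht
        rw [ENNReal.ofReal_lt_iff_lt_toReal ht.le hm]
      rw [this, Real.volume_Ioo, sub_zero, ENNReal.ofReal_toReal hm]
  have hmeas : MeasurableSet (Ioi (0 : ℝ) ∩ {t | ENNReal.ofReal t < m}) :=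
    measurableSet_Ioi.inter (measurableSet_lt ENNReal.measurable_ofReal measurable_const)
  calc m * codimH μ A = ∫⁻ _ in Ioi (0 : ℝ) ∩ {t | ENNReal.ofReal t < m}, codimH μ A := by
        rw [setLIntegral_const, ← hm, mul_comm]
    _ ≤ ∫⁻ t in Ioi (0 : ℝ) ∩ {t | ENNReal.ofReal t < m},
          codimH μ {x | x ∈ A ∧ ENNReal.ofReal t < g x} :=
        setLIntegral_mono' hmeas fun t ht => codimH_mono fun x hx =>
          ⟨hx, ht.2.trans_le (h x hx)⟩
    _ ≤ _ := lintegral_mono_set inter_subset_left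

lemma sum_mul_codimH_inter_ball_le (s : Finset T) {R r : ℝ} (hr : 0 < r) {N : ℝ≥0∞}
    (hNt : N ≠ ⊤) (hN : ∀ c : T, ((s.filter fun x => dist c x < R + r).card : ℝ≥0∞) ≤ N)
    {S : Set T} {g : T → ℝ≥0∞} {m : T → ℝ≥0∞}
    (hm : ∀ x ∈ s, ∀ y ∈ S ∩ ball x R, m x ≤ g y) :
    ∑ x ∈ s, m x * codimH μ (S ∩ ball x R) ≤ N * choquetIntegral μ S g := by
  calc ∑ x ∈ s, m x * codimH μ (S ∩ ball x R)
      ≤ ∑ x ∈ s, choquetIntegral μ (S ∩ ball x R) g :=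
        Finset.sum_le_sum fun x hx => mul_codimH_le_choquetIntegral (hm x hx)
    _ = ∫⁻ t in Ioi (0 : ℝ), ∑ x ∈ s,
          codimH μ {y | y ∈ S ∩ ball x R ∧ ENNReal.ofReal t < g y} :=
        (lintegral_finsetSum _ fun x _ => measurable_codimH_superlevel _ _).symm
    _ ≤ ∫⁻ t in Ioi (0 : ℝ), N * codimH μ {y | y ∈ S ∧ ENNReal.ofReal t < g y} := by
        refine lintegral_mono fun t => le_trans (Finset.sum_le_sum fun x _ => ?_)
          (sum_codimH_inter_ball_le s hr hN _)
        exact codimH_mono fun y hy => ⟨⟨hy.1.1, hy.2⟩, hy.1.2⟩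
    _ = _ := lintegral_const_mul' _ _ hNt

end CodimH

lemma exists_finset_separated_cover {T : Type*} [MetricSpace T] [CompactSpace T] {r : ℝ}
    (hr : 0 < r) : ∃ s : Finset T, (∀ x ∈ s, ∀ y ∈ s, x ≠ y → r / 2 < dist x y) ∧
      ∀ y, ∃ x ∈ s, dist y x < r := by
  let ε : ℝ≥0 := ⟨r / 4, by positivity⟩
  have hε : ε ≠ 0 := fun h => by
    have : r / 4 = 0 := congrArg NNReal.toReal h
    linarith
  have hεeq : ((2 * ε : ℝ≥0) : ℝ) = r / 2 := by
    change 2 * (r / 4) = r / 2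
    ring
  obtain ⟨N, -, hNf, hN⟩ := exists_finite_isCover_of_isCompact hε (isCompact_univ (X := T))
  have hp : packingNumber (2 * ε) (univ : Set T) ≠ ⊤ :=
    ne_top_of_le_ne_top hNf.encard_lt_top.ne
      ((packingNumber_two_mul_le_externalCoveringNumber ε univ).trans
        hN.externalCoveringNumber_le_encard)
  have hfin : (maximalSeparatedSet (2 * ε) (univ : Set T)).Finite := by
    rw [← encard_ne_top_iff, encard_maximalSeparatedSet hp]
    exact hp
  refine ⟨hfin.toFinset, fun x hx y hy hxy => ?_, fun y => ?_⟩
  · have := isSeparated_maximalSeparatedSet (hfin.mem_toFinset.1 hx) (hfin.mem_toFinset.1 hy) hxy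
    change ((2 * ε : ℝ≥0) : ℝ≥0∞) < edist x y at this
    rw [edist_nndist, ENNReal.coe_lt_coe, ← NNReal.coe_lt_coe, hεeq] at this
    exact this
  · have hcov := isCover_iff_subset_iUnion_closedBall.1 (isCover_maximalSeparatedSet hp)
    obtain ⟨x, hx, hxy⟩ := mem_iUnion₂.1 (hcov (mem_univ y))
    refine ⟨x, hfin.mem_toFinset.2 hx, ?_⟩
    rw [mem_closedBall, hεeq] at hxy
    linarith

lemma IsPIMeasure.card_filter_dist_lt_le {T : Type*} [MetricSpace T] [MeasurableSpace T]
    [BorelSpace T] {μ : Measure T} {D K : ℝ≥0} {Λ : ℝ} (h : IsPIMeasure μ D K Λ) {s : Finset T}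
    {r R : ℝ} (hr : 0 < r) (hs : ∀ x ∈ s, ∀ y ∈ s, x ≠ y → r / 2 < dist x y) {k : ℕ}
    (hk : 2 * R + r ≤ 2 ^ k * (r / 4)) (c : T) :
    ((s.filter fun x => dist c x < R).card : ℝ≥0∞) ≤ D ^ k := by
  set F := s.filter fun x => dist c x < R with hF
  rcases F.eq_empty_or_nonempty with hemp | hne
  · simp [hemp]
  have hR : 0 < R := by
    obtain ⟨x, hx⟩ := hne
    exact dist_nonneg.trans_lt (Finset.mem_filter.1 hx).2
  have hb0 := (h.ball_pos c (R + r) (by linarith)).ne'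
  have hbt := h.ball_ne_top c (R + r)
  have hdisj : PairwiseDisjoint (↑F) fun x : T => ball x (r / 4) := by
    intro x hx y hy hxy
    refine ball_disjoint_ball ?_
    have := hs x (Finset.mem_filter.1 hx).1 y (Finset.mem_filter.1 hy).1 hxy
    linarith
  have hsum : ∑ x ∈ F, μ (ball x (r / 4)) ≤ μ (ball c (R + r)) := by
    rw [← measure_biUnion_finset hdisj fun _ _ => measurableSet_ball]
    refine measure_mono (iUnion₂_subset fun x hx => ball_subset_ball' ?_)
    have := (Finset.mem_filter.1 hx).2
    rw [dist_comm]
    linarith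
  have hmul : F.card * μ (ball c (R + r)) ≤ D ^ k * μ (ball c (R + r)) := by
    calc F.card * μ (ball c (R + r)) = ∑ x ∈ F, μ (ball c (R + r)) := by simp
      _ ≤ ∑ x ∈ F, D ^ k * μ (ball x (r / 4)) := by
          refine Finset.sum_le_sum fun x hx => measure_ball_le_pow_mul h.doubling k (by linarith) ?_
          have := (Finset.mem_filter.1 hx).2
          linarith
      _ = D ^ k * ∑ x ∈ F, μ (ball x (r / 4)) := by rw [Finset.mul_sum]
      _ ≤ _ := by gcongr
  exact (ENNReal.mul_le_mul_iff_left hb0 hbt).1 hmul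

end Duality

namespace Duality

/-- The representative in `[0, 1)` of a point of the circle. -/
def fracRep (u : UnitAddCircle) : ℝ := AddCircle.measurableEquivIco 1 0 u

/-- The representative in `[-1/2, 1/2)` of a point of the circle. -/
def balRep (u : UnitAddCircle) : ℝ := AddCircle.measurableEquivIco 1 (-1 / 2) u

lemma measurable_fracRep : Measurable fracRep :=
  measurable_subtype_coe.comp (AddCircle.measurableEquivIco 1 0).measurable

lemma measurable_balRep : Measurable balRep :=
  measurable_subtype_coe.comp (AddCircle.measurableEquivIco 1 (-1 / 2)).measurable

lemma coe_fracRep (u : UnitAddCircle) : (fracRep u : UnitAddCircle) = u :=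
  AddCircle.coe_equivIco (p := (1 : ℝ)) (a := 0)

lemma coe_balRep (u : UnitAddCircle) : (balRep u : UnitAddCircle) = u :=
  AddCircle.coe_equivIco (p := (1 : ℝ)) (a := -1 / 2)

lemma fracRep_mem (u : UnitAddCircle) : fracRep u ∈ Ico (0 : ℝ) 1 := by
  simpa [fracRep] using (AddCircle.measurableEquivIco 1 0 u).2

lemma balRep_mem (u : UnitAddCircle) : balRep u ∈ Ico (-1 / 2 : ℝ) (1 / 2) := by
  have := (AddCircle.measurableEquivIco 1 (-1 / 2) u).2
  norm_num at this
  exact ⟨by simpa [balRep, neg_div] using this.1, by simpa [balRep, neg_div] using this.2⟩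

lemma fracRep_coe {x : ℝ} (hx : x ∈ Ico (0 : ℝ) 1) : fracRep (x : UnitAddCircle) = x := by
  have := AddCircle.equivIco_coe_eq (p := (1 : ℝ)) (a := 0) (x := x) (by simpa using hx)
  exact congrArg Subtype.val this

lemma balRep_coe {x : ℝ} (hx : x ∈ Ico (-1 / 2 : ℝ) (1 / 2)) :
    balRep (x : UnitAddCircle) = x := by
  have := AddCircle.equivIco_coe_eq (p := (1 : ℝ)) (a := -1 / 2) (x := x)
    ⟨hx.1, by linarith [hx.2]⟩
  exact congrArg Subtype.val this

lemma abs_balRep (u : UnitAddCircle) : |balRep u| = ‖u‖ := by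
  conv_rhs => rw [← coe_balRep u]
  refine ((AddCircle.norm_coe_eq_abs_iff (1 : ℝ) one_ne_zero).2 ?_).symm
  have := balRep_mem u
  rw [abs_one, abs_le]
  constructor <;> linarith [this.1, this.2]

lemma balRep_sub_balRep {u v w : UnitAddCircle} (h₁ : ‖v - u‖ < 1 / 8) (h₂ : ‖v - w‖ < 1 / 8) :
    balRep (v - u) - balRep (v - w) = balRep (w - u) := by
  rw [← abs_balRep, abs_lt] at h₁ h₂
  have : w - u = ((balRep (v - u) - balRep (v - w) : ℝ) : UnitAddCircle) := by
    rw [AddCircle.coe_sub, coe_balRep, coe_balRep]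
    abel
  rw [this, balRep_coe ⟨by linarith, by linarith⟩]

lemma continuousAt_balRep {u : UnitAddCircle} (hu : ‖u‖ < 1 / 8) : ContinuousAt balRep u := by
  refine continuous_subtype_val.continuousAt.comp
    (AddCircle.continuousAt_equivIco 1 (-1 / 2) (x := u) ?_)
  rintro rfl
  rw [(AddCircle.norm_coe_eq_abs_iff (1 : ℝ) one_ne_zero).2 (by norm_num [abs_of_neg])] at hu
  norm_num at hu

/-- Near a point `u` of the circle, the difference of the two branches of the argument centred
at `u` and cut at `0` is a translate of the indicator function of a half-line. -/
lemma exists_balRep_sub_fracRep_eq (u : UnitAddCircle) : ∃ k : ℤ, ∀ v, ‖v - u‖ < 1 / 8 →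
    balRep (v - u) - fracRep v = (k - 1 - fracRep u) +
      {v | (k : ℝ) ≤ fracRep u + balRep (v - u)}.indicator (fun _ => (1 : ℝ)) v := by
  have hu := fracRep_mem u
  have hfrac : ∀ v, ∀ m : ℤ, (m : ℝ) ≤ fracRep u + balRep (v - u) →
      fracRep u + balRep (v - u) < m + 1 → fracRep v = fracRep u + balRep (v - u) - m := by
    intro v m h1 h2
    have : v = ((fracRep u + balRep (v - u) - m : ℝ) : UnitAddCircle) := by
      rw [AddCircle.coe_sub, AddCircle.coe_add, coe_fracRep, coe_balRep, intCast_coe_eq_zero]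
      abel
    conv_lhs => rw [this]
    exact fracRep_coe ⟨by linarith, by linarith⟩
  have key : ∀ k : ℤ, (∀ v, ‖v - u‖ < 1 / 8 → (k : ℝ) - 1 ≤ fracRep u + balRep (v - u) ∧
      fracRep u + balRep (v - u) < k + 1) → ∀ v, ‖v - u‖ < 1 / 8 →
      balRep (v - u) - fracRep v = (k - 1 - fracRep u) +
      {v | (k : ℝ) ≤ fracRep u + balRep (v - u)}.indicator (fun _ => (1 : ℝ)) v := by
    intro k hk v hv
    obtain ⟨h1, h2⟩ := hk v hv
    by_cases h : (k : ℝ) ≤ fracRep u + balRep (v - u)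
    · rw [indicator_of_mem (by exact h), hfrac v k h h2]
      ring
    · rw [indicator_of_notMem (by exact h), hfrac v (k - 1) (by push_cast; exact h1)
        (by push_cast; linarith [not_le.1 h])]
      push_cast
      ring
  rcases le_total (1 / 2) (fracRep u) with h | h
  · refine ⟨1, key 1 fun v hv => ?_⟩
    rw [← abs_balRep, abs_lt] at hv
    push_cast
    constructor <;> linarith [hu.1, hu.2]
  · refine ⟨0, key 0 fun v hv => ?_⟩
    rw [← abs_balRep, abs_lt] at hv
    push_cast
    constructor <;> linarith [hu.1, hu.2]

lemma tentAvg_congr {T : Type*} [MetricSpace T] [MeasurableSpace T] {μ : Measure T} {r : ℝ}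
    (hr : 0 < r) {z : T} {g g' : T → ℝ} (h : ∀ y ∈ ball z r, g y = g' y) :
    tentAvg μ r z g = tentAvg μ r z g' := by
  unfold tentAvg
  congr 2
  ext y
  by_cases hy : y ∈ ball z r
  · rw [h y hy]
  · rw [tent_eq_zero hr hy, zero_mul, zero_mul]

/-- The mollified correction turning a lift of `φ` into a function that only varies near the
level set `φ = 0`. -/
def smoothing {T : Type*} [MetricSpace T] [MeasurableSpace T] (μ : Measure T)
    (φ : T → UnitAddCircle) (r : ℝ) (z : T) : ℝ :=
  tentAvg μ r z fun y => balRep (φ y - φ z) - fracRep (φ y)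

section Smoothing

variable {T : Type*} [MetricSpace T] [MeasurableSpace T] [BorelSpace T] {μ : Measure T}
  {D K : ℝ≥0} {Λ : ℝ} {φ : T → UnitAddCircle}

lemma measurable_balRep_sub_fracRep (hφ : Continuous φ) (z : T) :
    Measurable fun y => balRep (φ y - φ z) - fracRep (φ y) :=
  (measurable_balRep.comp (hφ.sub continuous_const).measurable).sub
    (measurable_fracRep.comp hφ.measurable)

lemma abs_balRep_sub_fracRep_le (u v : UnitAddCircle) : |balRep u - fracRep v| ≤ 2 := by
  have h1 := balRep_mem u
  have h2 := fracRep_mem v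
  rw [abs_le]
  constructor <;> linarith [h1.1, h1.2, h2.1, h2.2]

lemma IsPIMeasure.integrable_balRep_sub_fracRep (h : IsPIMeasure μ D K Λ) (hφ : Continuous φ)
    (z : T) : Integrable (fun y => balRep (φ y - φ z) - fracRep (φ y)) μ := by
  have := h.isFiniteMeasure
  exact Integrable.of_bound (measurable_balRep_sub_fracRep hφ z).aestronglyMeasurable 2
    (ae_of_all _ fun y => abs_balRep_sub_fracRep_le _ _)

lemma abs_smoothing_le (h : IsPIMeasure μ D K Λ) {r : ℝ} (hr : 0 < r) (z : T) :
    |smoothing μ φ r z| ≤ 2 := by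
  have htent := h.integrable_tent hr z
  have hpos : 0 ≤ ∫ y, tent r z y ∂μ := integral_nonneg fun y => tent_nonneg _ _ _
  rw [smoothing, tentAvg, abs_div, abs_of_nonneg hpos]
  refine div_le_of_le_mul₀ hpos zero_le_two ?_
  rw [← integral_const_mul]
  refine norm_integral_le_of_norm_le
    (f := fun y => tent r z y * (balRep (φ y - φ z) - fracRep (φ y)))
    (htent.const_mul 2) (ae_of_all _ fun y => ?_)
  rw [norm_mul, Real.norm_of_nonneg (tent_nonneg _ _ _), mul_comm]
  exact mul_le_mul_of_nonneg_right (abs_balRep_sub_fracRep_le _ _) (tent_nonneg _ _ _)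

theorem IsPIMeasure.edist_add_smoothing_le (h : IsPIMeasure μ D K Λ) (hφ : Continuous φ)
    {r : ℝ} (hr : 0 < r) (hφr : ∀ y z, dist y z < 4 * Λ * r → ‖φ y - φ z‖ < 1 / 8)
    (hS : codimH μ (φ ⁻¹' {0}) ≠ ⊤) {z z' : T} (hd : dist z z' < r) {l l' : ℝ}
    (hl : (l : UnitAddCircle) = φ z) (hl' : (l' : UnitAddCircle) = φ z') (hll : |l' - l| < 1 / 2) :
    edist (l + smoothing μ φ r z) (l' + smoothing μ φ r z') ≤
      ((2 * D + 4 * D ^ 4) * (2 * K * D ^ 2) : ℝ≥0) * edist z z' / μ (ball z r) *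
        codimH μ (φ ⁻¹' {0} ∩ ball z (4 * Λ * r)) := by
  have hΛ := h.one_le_Λ
  have hΛr : r ≤ Λ * r := le_mul_of_one_le_left hr.le hΛ
  set g : T → ℝ := fun y => balRep (φ y - φ z) - fracRep (φ y) with hg
  have hgi : Integrable g μ := h.integrable_balRep_sub_fracRep hφ z
  have hsm : smoothing μ φ r z' = tentAvg μ r z' g - (l' - l) := by
    rw [← h.tentAvg_sub_const hr z' hgi, smoothing]
    refine tentAvg_congr hr fun y hy => ?_
    have h1 : balRep (φ z' - φ z) = l' - l := by
      rw [← hl, ← hl', ← AddCircle.coe_sub]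
      rw [abs_lt] at hll
      exact balRep_coe ⟨by linarith, by linarith⟩
    rw [mem_ball] at hy
    have h2 := balRep_sub_balRep (hφr y z (by linarith [dist_triangle y z' z, dist_comm z z']))
      (hφr y z' (by linarith))
    simp only [hg]
    linarith
  have : edist (l + smoothing μ φ r z) (l' + smoothing μ φ r z') =
      edist (tentAvg μ r z g) (tentAvg μ r z' g) := by
    rw [hsm, show l' + (tentAvg μ r z' g - (l' - l)) = l + tentAvg μ r z' g by ring,
      edist_add_left]
    rfl
  rw [this]
  obtain ⟨k, hk⟩ := exists_balRep_sub_fracRep_eq (φ z)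
  set E : Set T := {y | (k : ℝ) ≤ fracRep (φ z) + balRep (φ y - φ z)} with hE
  refine h.edist_tentAvg_le (E := E) (a := k - 1 - fracRep (φ z)) ?_ hd hgi ?_ ?_
    (ne_top_of_le_ne_top hS (codimH_mono inter_subset_left))
  · exact measurableSet_le measurable_const
      ((measurable_balRep.comp (hφ.sub continuous_const).measurable).const_add _)
  · intro y hy
    exact hk (φ y) (hφr y z (by rw [mem_ball] at hy; linarith))
  · intro γ hγ hne
    set q : ℝ → ℝ := fun t => fracRep (φ z) + balRep (φ (γ.toFun t) - φ z) with hq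
    have hqc : ContinuousOn q (Icc γ.a γ.b) := by
      refine continuousOn_const.add fun t ht => ?_
      have := hφr _ _ (hγ t ht)
      exact (continuousAt_balRep this).comp_continuousWithinAt (f := fun t => φ (γ.toFun t) - φ z)
        (((hφ.continuousAt.comp_continuousWithinAt (γ.lip.continuousOn t ht)).sub
          continuousWithinAt_const))
    have hmem : (k : ℝ) ∈ uIcc (q γ.a) (q γ.b) := by
      have h1 : γ.start ∈ E ↔ (k : ℝ) ≤ q γ.a := Iff.rfl
      have h2 : γ.finish ∈ E ↔ (k : ℝ) ≤ q γ.b := Iff.rfl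
      rw [h1, h2] at hne
      rw [mem_uIcc]
      by_cases h3 : (k : ℝ) ≤ q γ.a
      · exact Or.inr ⟨by_contra fun h4 => hne (iff_of_true h3 (not_le.1 h4).le), h3⟩
      · exact Or.inl ⟨(not_le.1 h3).le, by_contra fun h4 => hne (iff_of_false h3 h4)⟩
    obtain ⟨t, ht, htk⟩ := intermediate_value_uIcc (by rwa [uIcc_of_le γ.hab]) hmem
    rw [uIcc_of_le γ.hab] at ht
    refine ⟨t, ht, ?_⟩
    have : φ (γ.toFun t) = (q t : UnitAddCircle) := by
      rw [hq, AddCircle.coe_add, coe_fracRep, coe_balRep]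
      abel
    rw [mem_preimage, mem_singleton_iff, this, htk, intCast_coe_eq_zero]

end Smoothing

end Duality

namespace Duality

section WeakUpperGradient

variable {X : Type*} [PseudoMetricSpace X] [MeasurableSpace X] {μ : Measure X} {p : ℝ}

lemma pathMod_empty (hp : 0 < p) : pathMod μ p ∅ = 0 :=
  le_antisymm (iInf₂_le_of_le 0 ⟨measurable_const, fun _ h => h.elim⟩
    (by simp [ENNReal.zero_rpow_of_pos hp])) bot_le

variable {Y : Type*} [PseudoEMetricSpace Y] {u : X → Y} {ρ : X → ℝ≥0∞}

lemma IsUpperGradient.isWeakUpperGradient (h : IsUpperGradient u ρ) (hp : 0 < p) :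
    IsWeakUpperGradient μ p u ρ := by
  rw [IsWeakUpperGradient]
  convert pathMod_empty (μ := μ) hp
  exact eq_empty_of_forall_notMem fun γ hγ => hγ (h γ)

lemma IsUpperGradient.isWeakUpperGradientOn (h : IsUpperGradient u ρ) (hp : 0 < p) (U : Set X) :
    IsWeakUpperGradientOn μ p U u ρ := by
  rw [IsWeakUpperGradientOn]
  convert pathMod_empty (μ := μ.restrict U) hp
  exact eq_empty_of_forall_notMem fun γ hγ => hγ.2 (h γ)

end WeakUpperGradient

lemma isLocallyFiniteMeasure_of_isLiftedMeasure {T Tt : Type*} [MetricSpace T]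
    [MeasurableSpace T] [MetricSpace Tt] [MeasurableSpace Tt] [OpensMeasurableSpace Tt]
    {π : Tt → T} {μ : Measure T} [IsFiniteMeasure μ] {μt : Measure Tt} (hπ : IsLocalIsometry π)
    (hμ : IsLiftedMeasure π μ μt) : IsLocallyFiniteMeasure μt := by
  refine ⟨fun x => ?_⟩
  obtain ⟨ε, hε, h⟩ := hπ x
  refine ⟨ball x ε, ball_mem_nhds x hε, ?_⟩
  rw [hμ _ measurableSet_ball]
  calc ∫⁻ y, ((π ⁻¹' {y} ∩ ball x ε).encard : ℝ≥0∞) ∂μ ≤ ∫⁻ _, 1 ∂μ := by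
        refine lintegral_mono fun y => ?_
        have : (π ⁻¹' {y} ∩ ball x ε).encard ≤ 1 := by
          refine encard_le_one_iff.2 fun a b ha hb => ?_
          rw [← dist_eq_zero, ← h a ha.2 b hb.2, ha.1, hb.1, dist_self]
        exact (ENat.toENNReal_le.2 this).trans_eq ENat.toENNReal_one
    _ < ⊤ := by simp

section BallSum

variable {T : Type*} [MetricSpace T]

/-- The sum of the multiples `M i` of the indicator functions of the balls of radius `r`
centred at the points of `s`. -/
def ballSum (s : Finset T) (M : T → ℝ≥0∞) (r : ℝ) (x : T) : ℝ≥0∞ :=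
  ∑ i ∈ s, (ball i r).indicator (fun _ => M i) x

lemma measurable_ballSum [MeasurableSpace T] [OpensMeasurableSpace T] (s : Finset T)
    (M : T → ℝ≥0∞) (r : ℝ) : Measurable (ballSum s M r) :=
  Finset.measurable_fun_sum _ fun _ _ => measurable_const.indicator measurableSet_ball

lemma ballSum_le (s : Finset T) (M : T → ℝ≥0∞) (r : ℝ) (x : T) :
    ballSum s M r x ≤ ∑ i ∈ s, M i :=
  Finset.sum_le_sum fun _ _ => indicator_le_self _ _ _

lemma le_ballSum {s : Finset T} {M : T → ℝ≥0∞} {r : ℝ} {i x : T} (hi : i ∈ s)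
    (hx : x ∈ ball i r) : M i ≤ ballSum s M r x := by
  have := Finset.single_le_sum (f := fun i => (ball i r).indicator (fun _ => M i) x)
    (fun _ _ => zero_le) hi
  rwa [indicator_of_mem hx] at this

lemma lintegral_mul_ballSum [MeasurableSpace T] [OpensMeasurableSpace T] {μ : Measure T}
    {g : T → ℝ≥0∞} (hg : Measurable g) (s : Finset T) (M : T → ℝ≥0∞) (r : ℝ) :
    ∫⁻ x, g x * ballSum s M r x ∂μ = ∑ i ∈ s, M i * ∫⁻ x in ball i r, g x ∂μ := by
  simp_rw [ballSum, Finset.mul_sum]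
  rw [lintegral_finsetSum (f := fun i x => g x * (ball i r).indicator (fun _ => M i) x) _
    fun i _ => hg.mul (measurable_const.indicator measurableSet_ball)]
  refine Finset.sum_congr rfl fun i _ => ?_
  rw [← lintegral_const_mul _ hg, ← lintegral_indicator measurableSet_ball]
  refine lintegral_congr fun x => ?_
  by_cases hx : x ∈ ball i r
  · simp [hx, mul_comm]
  · simp [hx]

variable {Tt : Type*} [MetricSpace Tt] {π : Tt → T} {s : Finset T} {M : T → ℝ≥0∞} {r : ℝ}
  {F f : Tt → ℝ}

lemma isUpperGradient_ballSum_comp (hπ : IsLocalIsometry π) (hr : 0 < r) (hF : Continuous F)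
    (hs : ∀ y, ∃ i ∈ s, dist y i < r)
    (hf : ∀ x x', ∀ i ∈ s, dist (π x) (π x') < r → |F x' - F x| < 1 / 2 → dist (π x) i < r →
      edist (f x) (f x') ≤ M i * edist (π x) (π x')) :
    IsUpperGradient f (ballSum s M (2 * r) ∘ π) := by
  intro γ
  refine edist_le_lintegral_of_local (F := fun t => f (γ.toFun t)) γ.hab fun t₀ ht₀ => ?_
  obtain ⟨ε, hε, hiso⟩ := hπ (γ.toFun t₀)
  obtain ⟨δ, hδ, hFδ⟩ := Metric.continuous_iff.1 hF (γ.toFun t₀) (1 / 4) (by norm_num)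
  refine ⟨min (min ε δ) (r / 2), by positivity, fun t ht t' ht' htb htb' htt' => ?_⟩
  have hnear : ∀ u ∈ Icc γ.a γ.b, u ∈ ball t₀ (min (min ε δ) (r / 2)) →
      dist (γ.toFun u) (γ.toFun t₀) < min (min ε δ) (r / 2) := fun u hu hub => by
    refine (γ.lip.dist_le_mul u hu t₀ ht₀).trans_lt ?_
    rwa [NNReal.coe_one, one_mul]
  have hlt := hnear t ht htb
  have hlt' := hnear t' ht' htb'
  simp only [lt_min_iff] at hlt hlt'
  have hclose : ∀ u ∈ Icc γ.a γ.b, u ∈ ball t₀ (min (min ε δ) (r / 2)) →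
      dist (π (γ.toFun t)) (π (γ.toFun u)) < r := fun u hu hub => by
    have hlu := hnear u hu hub
    simp only [lt_min_iff] at hlu
    rw [hiso _ hlt.1.1 _ hlu.1.1]
    linarith [dist_triangle_right (γ.toFun t) (γ.toFun u) (γ.toFun t₀)]
  obtain ⟨i, hi, hti⟩ := hs (π (γ.toFun t))
  have hFt : |F (γ.toFun t') - F (γ.toFun t)| < 1 / 2 := by
    have h1 := hFδ _ hlt.1.2
    have h2 := hFδ _ hlt'.1.2
    rw [← Real.dist_eq]
    linarith [dist_triangle_right (F (γ.toFun t')) (F (γ.toFun t)) (F (γ.toFun t₀))]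
  calc edist (f (γ.toFun t)) (f (γ.toFun t'))
      ≤ M i * edist (π (γ.toFun t)) (π (γ.toFun t')) := hf _ _ i hi (hclose t' ht' htb') hFt hti
    _ ≤ M i * ENNReal.ofReal (t' - t) := by
        gcongr
        rw [edist_dist, hiso _ hlt.1.1 _ hlt'.1.1]
        refine ENNReal.ofReal_le_ofReal ?_
        have := γ.lip.dist_le_mul t ht t' ht'
        rwa [NNReal.coe_one, one_mul, dist_comm t, Real.dist_eq,
          abs_of_nonneg (sub_nonneg.2 htt')] at this
    _ = ∫⁻ _ in Icc t t', M i := by rw [setLIntegral_const, Real.volume_Icc]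
    _ ≤ _ := by
        refine setLIntegral_mono' measurableSet_Icc fun u hu => le_ballSum hi ?_
        have huI : u ∈ Icc γ.a γ.b := ⟨ht.1.trans hu.1, hu.2.trans ht'.2⟩
        have hub : u ∈ ball t₀ (min (min ε δ) (r / 2)) :=
          (convex_ball t₀ _).ordConnected.out htb htb' hu
        rw [mem_ball, dist_comm]
        linarith [hclose u huI hub, dist_triangle_left i (π (γ.toFun u)) (π (γ.toFun t))]

variable [MeasurableSpace T] [BorelSpace T] [MeasurableSpace Tt]
  [OpensMeasurableSpace Tt]

lemma memF_ballSum {μ : Measure T} [IsFiniteMeasure μ] {μt : Measure Tt} {τ : Tt → Tt} {p : ℝ}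
    (hp : 0 < p) (hπc : Continuous π) (hπ : IsLocalIsometry π) (hμ : IsLiftedMeasure π μ μt)
    (hr : 0 < r) (hM : ∀ i ∈ s, M i ≠ ⊤) (hF : Continuous F)
    (hs : ∀ y, ∃ i ∈ s, dist y i < r)
    (hf : ∀ x x', ∀ i ∈ s, dist (π x) (π x') < r → |F x' - F x| < 1 / 2 → dist (π x) i < r →
      edist (f x) (f x') ≤ M i * edist (π x) (π x'))
    {B : ℝ} (hfF : ∀ x, |f x - F x| ≤ B) (hτ : ∀ x, f (τ x) - f x = 1) :
    MemF π τ μt p (ballSum s M (2 * r)) := by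
  have hug := isUpperGradient_ballSum_comp hπ hr hF hs hf
  have hloc := isLocallyFiniteMeasure_of_isLiftedMeasure hπ hμ
  have hfin : ∀ U : Set Tt, IsOpen U → IsCompact (closure U) → ∀ g : Tt → ℝ≥0∞, ∀ c : ℝ≥0∞,
      c ≠ ⊤ → (∀ x ∈ U, g x ≤ c) → ∫⁻ x in U, g x ^ p ∂μt < ⊤ := by
    intro U hU hUc g c hc hgc
    calc ∫⁻ x in U, g x ^ p ∂μt ≤ ∫⁻ _ in U, c ^ p ∂μt :=
          setLIntegral_mono' hU.measurableSet fun x hx =>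
            ENNReal.rpow_le_rpow (hgc x hx) hp.le
      _ = c ^ p * μt U := setLIntegral_const _ _
      _ < ⊤ := ENNReal.mul_lt_top (ENNReal.rpow_lt_top_of_nonneg hp.le hc)
          ((measure_mono subset_closure).trans_lt hUc.measure_lt_top)
  refine ⟨measurable_ballSum _ _ _, f, fun U hU hUc => ⟨?_, _, ?_,
    hug.isWeakUpperGradientOn hp U, ?_⟩, ae_of_all _ hτ, hug.isWeakUpperGradient hp⟩
  · obtain ⟨b, hb⟩ := hUc.exists_bound_of_continuousOn hF.continuousOn
    refine hfin U hU hUc _ (ENNReal.ofReal (b + B)) ENNReal.ofReal_ne_top fun x hx =>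
      ENNReal.ofReal_le_ofReal ?_
    have h1 := hb x (subset_closure hx)
    rw [Real.norm_eq_abs] at h1
    linarith [abs_sub_abs_le_abs_sub (f x) (F x), hfF x]
  · exact (measurable_ballSum _ _ _).comp hπc.measurable
  · exact hfin U hU hUc _ (∑ i ∈ s, M i) (ENNReal.sum_ne_top.2 hM) fun x _ =>
      ballSum_le _ _ _ _

end BallSum

end Duality

namespace Duality

lemma restrMax_mono {T : Type*} [MetricSpace T] [MeasurableSpace T] {μ : Measure T}
    {R R' : ℝ≥0∞} (h : R ≤ R') (g : T → ℝ≥0∞) (x : T) : restrMax μ R g x ≤ restrMax μ R' g x :=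
  iSup₂_mono' fun s hs => ⟨s, ⟨hs.1, hs.2.trans h⟩, le_rfl⟩

lemma choquetIntegral_mono {T : Type*} [MetricSpace T] [MeasurableSpace T] {μ : Measure T}
    {S : Set T} {g g' : T → ℝ≥0∞} (h : ∀ x, g x ≤ g' x) :
    choquetIntegral μ S g ≤ choquetIntegral μ S g' :=
  lintegral_mono fun _ => codimH_mono fun x hx => ⟨hx.1, hx.2.trans_le (h x)⟩

lemma nontrivial_of_isGenerator {T : Type*} [TopologicalSpace T] {x₀ : T} {α₀ : Path x₀ x₀}
    (h : IsGenerator x₀ α₀) : Nontrivial T := by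
  by_contra hT
  rw [not_nontrivial_iff_subsingleton] at hT
  have hα : α₀ = Path.refl x₀ := by
    ext t
    exact Subsingleton.elim _ _
  have : (1 : ℤ) = 0 := h.injective (by
    simp only [zpow_one, zpow_zero, hα]
    rfl)
  exact one_ne_zero this

/-- A function in the class `F` concentrated near the level set `φ = 0` whose pairing with any
function is controlled by the integral over that level set of the restricted maximal function. -/
theorem IsPIMeasure.exists_memF_lintegral_mul_le {T Tt : Type*} [MetricSpace T]
    [MeasurableSpace T] [BorelSpace T] [CompactSpace T] [MetricSpace Tt] [MeasurableSpace Tt]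
    [BorelSpace Tt] {μ : Measure T} {D K : ℝ≥0} {Λ : ℝ} (h : IsPIMeasure μ D K Λ)
    {μt : Measure Tt} {π : Tt → T} {τ : Tt → Tt} {p : ℝ} (hp : 0 < p) (hπc : Continuous π)
    (hπ : IsLocalIsometry π) (hμ : IsLiftedMeasure π μ μt) (hπτ : ∀ x, π (τ x) = π x)
    {φ : T → UnitAddCircle} (hφ : Continuous φ) {F : Tt → ℝ} (hF : Continuous F)
    (hFφ : ∀ x, (F x : UnitAddCircle) = φ (π x)) (hFτ : ∀ x, F (τ x) = F x + 1)
    {r : ℝ} (hr : 0 < r) (hφr : ∀ y z, dist y z < 4 * Λ * r → ‖φ y - φ z‖ < 1 / 8)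
    (hS : codimH μ (φ ⁻¹' {0}) ≠ ⊤) {k : ℕ} (hk : 52 * Λ ≤ 2 ^ k) :
    ∃ ρ, MemF π τ μt p ρ ∧ ∫⁻ x, ρ x ^ p ∂μ < ⊤ ∧ ∀ g : T → ℝ≥0∞, Measurable g →
      ∫⁻ x, g x * ρ x ∂μ ≤
        ((2 * D + 4 * D ^ 4) * (2 * K * D ^ 2) * D * D ^ k * D ^ k : ℝ≥0) *
          choquetIntegral μ (φ ⁻¹' {0}) (restrMax μ (ENNReal.ofReal (10 * Λ * r)) g) := by
  have hfin := h.isFiniteMeasure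
  have hΛ := h.one_le_Λ
  have hΛr : r ≤ Λ * r := le_mul_of_one_le_left hr.le hΛ
  have hkr : 52 * Λ * r ≤ 2 ^ k * r := by gcongr
  set A : ℝ≥0 := (2 * D + 4 * D ^ 4) * (2 * K * D ^ 2) with hA
  set S := φ ⁻¹' {0} with hSdef
  obtain ⟨s, hsep, hcov⟩ := exists_finset_separated_cover (T := T) hr
  set M : T → ℝ≥0∞ := fun i => A * D / μ (ball i r) * codimH μ (S ∩ ball i (5 * Λ * r)) with hM
  have hpos : ∀ i, μ (ball i r) ≠ 0 := fun i => (h.ball_pos i r hr).ne'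
  have hMtop : ∀ i, M i ≠ ⊤ := fun i =>
    ENNReal.mul_ne_top (ENNReal.div_ne_top (by finiteness) (hpos i))
      (ne_top_of_le_ne_top hS (codimH_mono inter_subset_left))
  refine ⟨ballSum s M (2 * r), ?_, ?_, fun g hg => ?_⟩
  · refine memF_ballSum (f := fun x => F x + smoothing μ φ r (π x)) (B := 2) hp hπc hπ hμ hr
      (fun i _ => hMtop i) hF hcov (fun x x' i _ hd hl hi => ?_) (fun x => ?_) (fun x => ?_)
    · refine (h.edist_add_smoothing_le hφ hr hφr hS hd (hFφ x) (hFφ x') hl).trans ?_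
      have hball : μ (ball i r) ≤ D * μ (ball (π x) r) := by
        have := measure_ball_le_pow_mul h.doubling 1 (x := i) (y := π x) (R := r) hr
          (by rw [dist_comm]; linarith)
        simpa using this
      have hdiv : (μ (ball (π x) r))⁻¹ ≤ D / μ (ball i r) := by
        rw [ENNReal.le_div_iff_mul_le (Or.inl (hpos i)) (Or.inl (h.ball_ne_top i r)), mul_comm,
          ← div_eq_mul_inv]
        exact ENNReal.div_le_of_le_mul hball
      have hsub : codimH μ (S ∩ ball (π x) (4 * Λ * r)) ≤ codimH μ (S ∩ ball i (5 * Λ * r)) :=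
        codimH_mono (inter_subset_inter_right _ (ball_subset_ball' (by linarith)))
      calc (A : ℝ≥0∞) * edist (π x) (π x') / μ (ball (π x) r) *
            codimH μ (S ∩ ball (π x) (4 * Λ * r))
          ≤ A * edist (π x) (π x') * (D / μ (ball i r)) *
            codimH μ (S ∩ ball i (5 * Λ * r)) := by
            rw [div_eq_mul_inv]
            gcongr
        _ = M i * edist (π x) (π x') := by
            simp only [hM, div_eq_mul_inv]
            ring
    · simpa using abs_smoothing_le h hr (π x)
    · simp only [hπτ, hFτ]
      ring
  · calc ∫⁻ x, ballSum s M (2 * r) x ^ p ∂μ ≤ ∫⁻ _, (∑ i ∈ s, M i) ^ p ∂μ :=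
          lintegral_mono fun x => ENNReal.rpow_le_rpow (ballSum_le _ _ _ _) hp.le
      _ < ⊤ := by
          rw [lintegral_const]
          exact ENNReal.mul_lt_top
            (ENNReal.rpow_lt_top_of_nonneg hp.le (ENNReal.sum_ne_top.2 fun i _ => hMtop i))
            (measure_lt_top _ _)
  · have hDk : ((D : ℝ≥0∞) ^ k) ≠ 0 :=
      pow_ne_zero _ (by exact_mod_cast (zero_lt_one.trans_le h.one_le_D).ne')
    set m : T → ℝ≥0∞ := fun i => (∫⁻ x in ball i (2 * r), g x ∂μ) / (D ^ k * μ (ball i r)) with hm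
    have hterm : ∀ i, M i * ∫⁻ x in ball i (2 * r), g x ∂μ =
        A * D * D ^ k * (m i * codimH μ (S ∩ ball i (5 * Λ * r))) := by
      intro i
      have : D ^ k * m i = (∫⁻ x in ball i (2 * r), g x ∂μ) / μ (ball i r) := by
        rw [hm, ← mul_div_assoc, ENNReal.mul_div_mul_left _ _ hDk (by finiteness)]
      rw [show (A : ℝ≥0∞) * D * D ^ k * (m i * codimH μ (S ∩ ball i (5 * Λ * r))) =
        A * D * (D ^ k * m i) * codimH μ (S ∩ ball i (5 * Λ * r)) by ring, this]
      simp only [hM, div_eq_mul_inv]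
      ring
    rw [lintegral_mul_ballSum hg]
    simp_rw [hterm]
    rw [← Finset.mul_sum]
    have hsum := sum_mul_codimH_inter_ball_le (μ := μ) s (R := 5 * Λ * r) hr (N := D ^ k)
      (by finiteness) (h.card_filter_dist_lt_le hr hsep (by linarith)) (S := S)
      (g := restrMax μ (ENNReal.ofReal (10 * Λ * r)) g) (m := m) (fun i _ y hy => ?_)
    · calc _ ≤ A * D * D ^ k * (D ^ k * choquetIntegral μ S
              (restrMax μ (ENNReal.ofReal (10 * Λ * r)) g)) := by gcongr
        _ = _ := by
            push_cast
            ring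
    · have hy' := hy.2
      rw [mem_ball] at hy'
      refine le_trans ?_ (le_iSup₂ (f := fun (t : ℝ)
        (_ : 0 < t ∧ ENNReal.ofReal t ≤ ENNReal.ofReal (10 * Λ * r)) =>
        (∫⁻ x in ball y t, g x ∂μ) / μ (ball y t)) (10 * Λ * r) ⟨by positivity, le_rfl⟩)
      refine ENNReal.div_le_div (lintegral_mono_set (ball_subset_ball' ?_))
        (measure_ball_le_pow_mul h.doubling k hr ?_)
      · rw [dist_comm]
        linarith
      · linarith

end Duality

open Duality in
/-- Inequality (4.1): `cap_p T ≤ C ∫_S M_{C/n} (ρ₀^{p-1}) dH` for every `S ∈ Γ*` and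
all large enough `n`. -/
theorem statement9 (Cμ : ℝ≥0∞) (CP lP : ℝ) :
    ∃ C : ℝ≥0∞, 0 < C ∧ C < ⊤ ∧
      ∀ (T : Type) [MetricSpace T] [MeasurableSpace T] [BorelSpace T] [CompactSpace T]
        (Tt : Type) [MetricSpace Tt] [MeasurableSpace Tt] [BorelSpace Tt]
        (μ : Measure T) (μt : Measure Tt) (x₀ : T) (α₀ : Path x₀ x₀)
        (π : Tt → T) (τ : Tt → Tt),
        Standing μ Cμ CP lP x₀ α₀ → CoverSetup π → IsDeck π x₀ α₀ τ →
        IsLiftedMeasure π μ μt →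
        ∀ p : ℝ, 1 < p →
          ∀ ρ₀ : T → ℝ≥0∞,
            MemF π τ μt p ρ₀ →
            cap μ p x₀ α₀ = ∫⁻ x, ρ₀ x ^ p ∂μ →
            (∀ ρ : T → ℝ≥0∞, MemF π τ μt p ρ → (∫⁻ x, ρ x ^ p ∂μ) < ⊤ →
              cap μ p x₀ α₀ ≤ ∫⁻ x, ρ₀ x ^ (p - 1) * ρ x ∂μ) →
            ∀ S ∈ Surfaces μ x₀ α₀, ∃ N : ℕ, ∀ n : ℕ, N ≤ n →
              cap μ p x₀ α₀ ≤
                C * choquetIntegral μ S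
                  (restrMax μ (C / (n : ℝ≥0∞)) fun x => ρ₀ x ^ (p - 1)) := by
  obtain ⟨D, K, Λ, hPI⟩ := exists_isPIMeasure_constants Cμ CP lP
  obtain ⟨k, hk⟩ := pow_unbounded_of_one_lt (52 * Λ) (one_lt_two)
  set A : ℝ≥0 := (2 * D + 4 * D ^ 4) * (2 * K * D ^ 2) * D * D ^ k * D ^ k with hA
  refine ⟨max (ENNReal.ofReal (10 * Λ)) A + 1, by simp, by finiteness, ?_⟩
  set C : ℝ≥0∞ := max (ENNReal.ofReal (10 * Λ)) A + 1 with hC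
  have hC1 : ENNReal.ofReal (10 * Λ) ≤ C := (le_max_left _ _).trans le_self_add
  have hC2 : (A : ℝ≥0∞) ≤ C := (le_max_right _ _).trans le_self_add
  clear_value C A
  intro T _ _ _ _ Tt _ _ _ μ μt x₀ α₀ π τ hT hπ hτ hμ p hp ρ₀ hρ₀ _ hmin S hS
  obtain ⟨hdoub, hpoinc, -, hgen, -⟩ := hT
  obtain ⟨φ, hφ, rfl, hSfin⟩ := hS
  have := nontrivial_of_isGenerator hgen
  have h := hPI T μ hdoub hpoinc
  have := hπ.2.2.2
  have hpath : PathConnectedSpace T := hπ.2.1.pathConnectedSpace hπ.1.continuous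
  have := h.locallyPathConnectedSpace
  obtain ⟨hφc, -⟩ := id hφ
  obtain ⟨F, hF, hFφ⟩ := exists_lift hπ hφc
  obtain ⟨δ, hδ, hδφ⟩ := Metric.uniformContinuous_iff.1
    (CompactSpace.uniformContinuous_of_continuous hφc) (1 / 8) (by norm_num)
  obtain ⟨N, hN⟩ := exists_nat_gt (4 * Λ / δ)
  have hΛ := h.one_le_Λ
  refine ⟨N, fun n hn => ?_⟩
  have hnN : 4 * Λ / δ < n := hN.trans_le (by exact_mod_cast hn)
  have hn0 : (0 : ℝ) < n := lt_trans (by positivity) hnN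
  obtain ⟨ρ, hρF, hρp, hρ⟩ := h.exists_memF_lintegral_mul_le (p := p) (by linarith)
    hπ.1.continuous hπ.2.2.1 hμ hτ.2.1 hφc hF hFφ
    (lift_deck_eq_add_one hπ.1 hτ hφ hF hFφ) (r := 1 / n) (by positivity) (fun y z hyz => by
      rw [← dist_eq_norm]
      refine hδφ (hyz.trans ?_)
      rw [div_lt_iff₀ hδ] at hnN
      rw [mul_one_div, div_lt_iff₀ hn0]
      linarith) hSfin.ne hk.le
  refine (hmin ρ hρF hρp).trans ((hρ _ (hρ₀.1.pow_const _)).trans ?_)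
  rw [← hA]
  refine mul_le_mul' hC2 (choquetIntegral_mono fun x => restrMax_mono ?_ _ x)
  rw [mul_one_div, ENNReal.ofReal_div_of_pos hn0, ENNReal.ofReal_natCast]
  gcongr
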